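/- arXiv:1711.06455 — 3 statements merged into one kernel-verified Lean document; each statement's English description precedes it below -/
import Mathlib

section
/- (Deleting very high resistance edges barely changes effective resistance) Let I be a connected weighted graph with m edges, e an edge of I, and ρ > m. Let I' be the subgraph of I consisting of all edges of resistance at most ρ r_e. Then I' is connected (it contains e) on the component of e, and Reff_I(e) ≤ Reff_{I'}(e) ≤ (1 / (1 - m/ρ)^2) * Reff_I(e). In particular, for ρ = (m/ε)^{10} one gets Reff_{I'}(e) ≤ (1 + 2ε/m^9) Reff_I(e) when ε ∈ (0,1) and m ≥ 2. -/
open Matrix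

/-- The signed indicator vector `χ_x - χ_y`. -/
def incv {V : Type*} [DecidableEq V] (x y : V) : V → ℝ := fun v =>
  (if v = x then 1 else 0) - (if v = y then 1 else 0)

/-- Weighted Laplacian of the multigraph whose edge `e` has endpoints `a e`, `b e`
and conductance `c e`. -/
noncomputable def lapM {V E : Type*} [DecidableEq V] [Fintype E]
    (a b : E → V) (c : E → ℝ) : Matrix V V ℝ :=
  ∑ e, c e • Matrix.vecMulVec (incv (a e) (b e)) (incv (a e) (b e))

/-- `M` is the Moore–Penrose pseudoinverse of `L`. -/
def IsMPInv {V : Type*} [Fintype V] (L M : Matrix V V ℝ) : Prop :=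
  L * M * L = L ∧ M * L * M = M ∧ (L * M)ᵀ = L * M ∧ (M * L)ᵀ = M * L

/-- Connectivity of a weighted graph, encoded as: the kernel of its Laplacian
consists exactly of the constant vectors. -/
def LapConnected {V : Type*} [Fintype V] (L : Matrix V V ℝ) : Prop :=
  ∀ x : V → ℝ, L.mulVec x = 0 → ∃ t : ℝ, ∀ v, x v = t

/-!
The effective resistance `R` between `x` and `y` satisfies Dirichlet's principle
`(ψ x - ψ y) ^ 2 ≤ R * energy ψ` for every `ψ : V → ℝ`. Let `R'` be the effective resistance after
the deletion, attained by the potential `φ'` of a unit current. Clamping `φ'` between its values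
at the poles does not increase its energy and bounds its drop along every edge by `R'`. Testing
the principle in the original graph on the clamped `φ'`, each deleted edge contributes at most
`R' ^ 2 / (ρ r_e)` to the energy, so that `R' ^ 2 ≤ R (R' + m R' ^ 2 / (ρ r_e))`. As `R ≤ r_e`,
dividing by `R'` gives `(1 - m / ρ) R' ≤ R`.
-/

section Energy

variable {V E : Type*} [Fintype E] {a b : E → V} {c c' : E → ℝ}

/-- The Dirichlet energy of the potential `φ` on the multigraph whose edge `f` has endpoints
`a f`, `b f` and conductance `c f`; a sum over edges, so that it makes sense for infinite `V`. -/
def dirichletEnergy (a b : E → V) (c : E → ℝ) (φ : V → ℝ) : ℝ :=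
  ∑ f, c f * (φ (a f) - φ (b f)) ^ 2

lemma mul_sq_sub_le_dirichletEnergy (hc : ∀ f, 0 ≤ c f) (φ : V → ℝ) (e : E) :
    c e * (φ (a e) - φ (b e)) ^ 2 ≤ dirichletEnergy a b c φ :=
  Finset.single_le_sum (f := fun f => c f * (φ (a f) - φ (b f)) ^ 2)
    (fun f _ => mul_nonneg (hc f) (sq_nonneg _)) (Finset.mem_univ e)

lemma dirichletEnergy_nonneg (hc : ∀ f, 0 ≤ c f) (φ : V → ℝ) : 0 ≤ dirichletEnergy a b c φ :=
  Finset.sum_nonneg fun f _ => mul_nonneg (hc f) (sq_nonneg _)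

lemma dirichletEnergy_mono (h : ∀ f, c' f ≤ c f) (φ : V → ℝ) :
    dirichletEnergy a b c' φ ≤ dirichletEnergy a b c φ :=
  Finset.sum_le_sum fun f _ => mul_le_mul_of_nonneg_right (h f) (sq_nonneg _)

lemma dirichletEnergy_contraction_comp_le (hc : ∀ f, 0 ≤ c f) {g : ℝ → ℝ}
    (hg : ∀ s t, |g s - g t| ≤ |s - t|) (φ : V → ℝ) :
    dirichletEnergy a b c (g ∘ φ) ≤ dirichletEnergy a b c φ :=
  Finset.sum_le_sum fun f _ => mul_le_mul_of_nonneg_left (sq_le_sq.mpr (hg _ _)) (hc f)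

lemma dirichletEnergy_le_add_sum_abs_sub_mul_sq {φ : V → ℝ} {B : ℝ}
    (hB : ∀ u v, |φ u - φ v| ≤ B) :
    dirichletEnergy a b c φ ≤ dirichletEnergy a b c' φ + (∑ f, |c f - c' f|) * B ^ 2 := by
  simp only [dirichletEnergy, Finset.sum_mul, ← Finset.sum_add_distrib]
  refine Finset.sum_le_sum fun f _ => ?_
  have hdrop : (φ (a f) - φ (b f)) ^ 2 ≤ B ^ 2 :=
    sq_le_sq.mpr ((hB _ _).trans (le_abs_self B))
  calc c f * (φ (a f) - φ (b f)) ^ 2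
      = c' f * (φ (a f) - φ (b f)) ^ 2 + (c f - c' f) * (φ (a f) - φ (b f)) ^ 2 := by ring
    _ ≤ c' f * (φ (a f) - φ (b f)) ^ 2 + |c f - c' f| * B ^ 2 := by
        gcongr
        exact le_abs_self _

end Energy

lemma IsMPInv.mulVec_mulVec_eq_of_orthogonal {V : Type*} [Fintype V] {L M : Matrix V V ℝ}
    (hM : IsMPInv L M) {d : V → ℝ} (hd : ∀ z, z ᵥ* L = 0 → d ⬝ᵥ z = 0) :
    L *ᵥ (M *ᵥ d) = d := by
  obtain ⟨hLML, -, hsymm, -⟩ := hM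
  have hvecMul : (L * M) *ᵥ d = d ᵥ* (L * M) := by rw [← vecMul_transpose, hsymm]
  -- `L * M` is the orthogonal projection onto the range of `L`, so `z` lies in its complement.
  set z := d - (L * M) *ᵥ d with hz
  have hzL : z ᵥ* L = 0 := by
    rw [hz, hvecMul, sub_vecMul, vecMul_vecMul, hLML, sub_self]
  have hproj : (L * M) *ᵥ d ⬝ᵥ z = 0 := by
    rw [dotProduct_comm, dotProduct_mulVec, ← vecMul_vecMul, hzL, zero_vecMul, zero_dotProduct]
  have hzz : z ⬝ᵥ z = 0 := by
    nth_rewrite 1 [hz]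
    rw [sub_dotProduct, hd z hzL, hproj, sub_zero]
  rw [mulVec_mulVec]
  exact (sub_eq_zero.mp (dotProduct_self_eq_zero.mp hzz)).symm

section EffectiveResistance

variable {V E : Type*} [Fintype V] [DecidableEq V] [Fintype E] {a b : E → V} {c c' : E → ℝ}
  {x y : V} {R R' : ℝ}

lemma incv_dotProduct (x y : V) (φ : V → ℝ) : incv x y ⬝ᵥ φ = φ x - φ y := by
  simp [incv, dotProduct, sub_mul, Finset.sum_sub_distrib]

lemma dotProduct_lapM_mulVec (a b : E → V) (c : E → ℝ) (φ ψ : V → ℝ) :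
    φ ⬝ᵥ lapM a b c *ᵥ ψ = ∑ f, c f * ((φ (a f) - φ (b f)) * (ψ (a f) - ψ (b f))) := by
  simp only [lapM, sum_mulVec, dotProduct_sum]
  refine Finset.sum_congr rfl fun f _ => ?_
  rw [smul_mulVec, vecMulVec_mulVec, op_smul_eq_smul, dotProduct_smul, dotProduct_smul,
    dotProduct_comm φ, incv_dotProduct, incv_dotProduct, smul_eq_mul, smul_eq_mul,
    mul_comm (ψ _ - _)]

lemma dotProduct_lapM_mulVec_self (a b : E → V) (c : E → ℝ) (φ : V → ℝ) :
    φ ⬝ᵥ lapM a b c *ᵥ φ = dirichletEnergy a b c φ := by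
  simp only [dotProduct_lapM_mulVec, dirichletEnergy, sq]

lemma sq_dotProduct_lapM_mulVec_le (hc : ∀ f, 0 ≤ c f) (φ ψ : V → ℝ) :
    (φ ⬝ᵥ lapM a b c *ᵥ ψ) ^ 2 ≤ dirichletEnergy a b c φ * dirichletEnergy a b c ψ := by
  rw [dotProduct_lapM_mulVec]
  exact Finset.sum_sq_le_sum_mul_sum_of_sq_le_mul _ (fun f _ => mul_nonneg (hc f) (sq_nonneg _))
    (fun f _ => mul_nonneg (hc f) (sq_nonneg _)) fun f _ => le_of_eq (by ring)

/-- `R` is the effective resistance between `x` and `y` in the network with conductances `c`: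
the potential drop from `x` to `y` of a unit current flowing from `x` to `y`. A relation rather
than a function, because no such potential exists when `x` and `y` are disconnected. -/
def IsReff (a b : E → V) (c : E → ℝ) (x y : V) (R : ℝ) : Prop :=
  ∃ φ : V → ℝ, lapM a b c *ᵥ φ = incv x y ∧ φ x - φ y = R

lemma dirichletEnergy_eq_sub_of_lapM_mulVec_eq {φ : V → ℝ} (hφ : lapM a b c *ᵥ φ = incv x y) :
    dirichletEnergy a b c φ = φ x - φ y := by
  rw [← dotProduct_lapM_mulVec_self, hφ, dotProduct_comm, incv_dotProduct]

lemma sub_eq_zero_of_vecMul_lapM_eq_zero (hc : ∀ f, 0 ≤ c f) {e : E} (he : 0 < c e) {z : V → ℝ}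
    (hz : z ᵥ* lapM a b c = 0) : z (a e) - z (b e) = 0 := by
  have henergy : dirichletEnergy a b c z = 0 := by
    rw [← dotProduct_lapM_mulVec_self, dotProduct_mulVec, hz, zero_dotProduct]
  have hdrop : c e * (z (a e) - z (b e)) ^ 2 ≤ 0 :=
    henergy ▸ mul_sq_sub_le_dirichletEnergy hc z e
  exact pow_eq_zero_iff two_ne_zero |>.mp
    (le_antisymm (nonpos_of_mul_nonpos_right hdrop he) (sq_nonneg _))

lemma isReff_of_isMPInv (hc : ∀ f, 0 ≤ c f) {e : E} (he : 0 < c e) {M : Matrix V V ℝ}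
    (hM : IsMPInv (lapM a b c) M) :
    IsReff a b c (a e) (b e) (incv (a e) (b e) ⬝ᵥ M *ᵥ incv (a e) (b e)) := by
  refine ⟨M *ᵥ incv (a e) (b e), hM.mulVec_mulVec_eq_of_orthogonal fun z hz => ?_,
    (incv_dotProduct _ _ _).symm⟩
  rw [incv_dotProduct, sub_eq_zero_of_vecMul_lapM_eq_zero hc he hz]

namespace IsReff

lemma nonneg (hR : IsReff a b c x y R) (hc : ∀ f, 0 ≤ c f) : 0 ≤ R := by
  obtain ⟨φ, hφ, rfl⟩ := hR
  exact dirichletEnergy_eq_sub_of_lapM_mulVec_eq hφ ▸ dirichletEnergy_nonneg hc φ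

lemma sq_sub_le_mul_dirichletEnergy (hR : IsReff a b c x y R) (hc : ∀ f, 0 ≤ c f) (ψ : V → ℝ) :
    (ψ x - ψ y) ^ 2 ≤ R * dirichletEnergy a b c ψ := by
  obtain ⟨φ, hφ, rfl⟩ := hR
  have hdrop : ψ ⬝ᵥ lapM a b c *ᵥ φ = ψ x - ψ y := by
    rw [hφ, dotProduct_comm, incv_dotProduct]
  rw [← hdrop, ← dirichletEnergy_eq_sub_of_lapM_mulVec_eq hφ, mul_comm]
  exact sq_dotProduct_lapM_mulVec_le hc ψ φ

lemma le_of_conductance_le (hR : IsReff a b c x y R) (hR' : IsReff a b c' x y R')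
    (hc' : ∀ f, 0 ≤ c' f) (hle : ∀ f, c' f ≤ c f) : R ≤ R' := by
  have hR₀ := hR.nonneg fun f => (hc' f).trans (hle f)
  have hR'₀ := hR'.nonneg hc'
  obtain ⟨φ, hφ, rfl⟩ := hR
  have hsq : (φ x - φ y) ^ 2 ≤ R' * (φ x - φ y) :=
    calc (φ x - φ y) ^ 2 ≤ R' * dirichletEnergy a b c' φ :=
          hR'.sq_sub_le_mul_dirichletEnergy hc' φ
      _ ≤ R' * dirichletEnergy a b c φ :=
          mul_le_mul_of_nonneg_left (dirichletEnergy_mono hle φ) hR'₀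
      _ = R' * (φ x - φ y) := by rw [dirichletEnergy_eq_sub_of_lapM_mulVec_eq hφ]
  rcases hR₀.eq_or_lt with hzero | hpos
  · rwa [← hzero]
  · exact le_of_mul_le_mul_right (by rwa [← sq]) hpos

lemma conductance_mul_le_one {e : E} (hR : IsReff a b c (a e) (b e) R) (hc : ∀ f, 0 ≤ c f) :
    c e * R ≤ 1 := by
  have hR₀ := hR.nonneg hc
  obtain ⟨φ, hφ, rfl⟩ := hR
  have hsq := mul_sq_sub_le_dirichletEnergy (a := a) (b := b) hc φ e
  rw [dirichletEnergy_eq_sub_of_lapM_mulVec_eq hφ] at hsq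
  rcases hR₀.eq_or_lt with hzero | hpos
  · simp [← hzero]
  · exact le_of_mul_le_mul_right (by linarith) hpos

lemma exists_dirichletEnergy_le_and_abs_sub_le (hR : IsReff a b c x y R) (hc : ∀ f, 0 ≤ c f) :
    ∃ ψ : V → ℝ, ψ x - ψ y = R ∧ dirichletEnergy a b c ψ ≤ R ∧ ∀ u v, |ψ u - ψ v| ≤ R := by
  have hR₀ := hR.nonneg hc
  obtain ⟨φ, hφ, rfl⟩ := hR
  have hyx : φ y ≤ φ x := sub_nonneg.mp hR₀
  let clamp : ℝ → ℝ := fun t => Set.projIcc (φ y) (φ x) hyx t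
  refine ⟨clamp ∘ φ, by simp [clamp], ?_, fun u v => ?_⟩
  · rw [← dirichletEnergy_eq_sub_of_lapM_mulVec_eq hφ]
    exact dirichletEnergy_contraction_comp_le hc (fun s t => Set.abs_projIcc_sub_projIcc hyx) φ
  · exact Real.dist_le_of_mem_Icc (Subtype.coe_prop _) (Subtype.coe_prop _)

/-- For positive resistances: the effective conductance `R⁻¹` is `1`-Lipschitz in the edge
conductances, for the `ℓ¹` distance. -/
lemma le_mul_one_add_sum_abs_sub_mul (hR : IsReff a b c x y R) (hR' : IsReff a b c' x y R')
    (hc : ∀ f, 0 ≤ c f) (hc' : ∀ f, 0 ≤ c' f) :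
    R' ≤ R * (1 + (∑ f, |c f - c' f|) * R') := by
  obtain ⟨ψ, hdrop, henergy, hosc⟩ := hR'.exists_dirichletEnergy_le_and_abs_sub_le hc'
  have hsq : R' ^ 2 ≤ R * (R' + (∑ f, |c f - c' f|) * R' ^ 2) :=
    calc R' ^ 2 = (ψ x - ψ y) ^ 2 := by rw [hdrop]
      _ ≤ R * dirichletEnergy a b c ψ := hR.sq_sub_le_mul_dirichletEnergy hc ψ
      _ ≤ R * (R' + (∑ f, |c f - c' f|) * R' ^ 2) := by
          refine mul_le_mul_of_nonneg_left ?_ (hR.nonneg hc)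
          exact (dirichletEnergy_le_add_sum_abs_sub_mul_sq hosc).trans (by gcongr)
  rcases (hR'.nonneg hc').eq_or_lt with hzero | hpos
  · simpa [← hzero] using hR.nonneg hc
  · exact le_of_mul_le_mul_right (by linarith) hpos

end IsReff

end EffectiveResistance

section Truncation

variable {V E : Type*} {r : E → ℝ}

/-- The conductances of the subgraph of edges of resistance at most `τ`: deleting an edge means
giving it conductance `0`, so that the edge type does not change. -/
noncomputable def truncatedConductance (r : E → ℝ) (τ : ℝ) (f : E) : ℝ :=
  if r f ≤ τ then (r f)⁻¹ else 0

lemma truncatedConductance_of_le {τ : ℝ} {f : E} (h : r f ≤ τ) :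
    truncatedConductance r τ f = (r f)⁻¹ :=
  if_pos h

lemma truncatedConductance_nonneg (hr : ∀ f, 0 < r f) (τ : ℝ) (f : E) :
    0 ≤ truncatedConductance r τ f := by
  unfold truncatedConductance
  split_ifs
  exacts [inv_nonneg.mpr (hr f).le, le_rfl]

lemma truncatedConductance_le_inv (hr : ∀ f, 0 < r f) (τ : ℝ) (f : E) :
    truncatedConductance r τ f ≤ (r f)⁻¹ := by
  unfold truncatedConductance
  split_ifs
  exacts [le_rfl, inv_nonneg.mpr (hr f).le]

lemma abs_inv_sub_truncatedConductance_le {τ : ℝ} (hτ : 0 < τ) (f : E) :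
    |(r f)⁻¹ - truncatedConductance r τ f| ≤ τ⁻¹ := by
  unfold truncatedConductance
  split_ifs with h
  · simpa using hτ.le
  · have hlt : τ < r f := not_le.mp h
    rw [sub_zero, abs_of_pos (inv_pos.mpr (hτ.trans hlt))]
    exact inv_anti₀ hτ hlt.le

lemma sum_abs_inv_sub_truncatedConductance_le [Fintype E] {τ : ℝ} (hτ : 0 < τ) :
    ∑ f, |(r f)⁻¹ - truncatedConductance r τ f| ≤ Fintype.card E * τ⁻¹ :=
  (Finset.sum_le_card_nsmul _ _ _ fun f _ => abs_inv_sub_truncatedConductance_le hτ f).trans_eq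
    (by rw [Finset.card_univ, nsmul_eq_mul])

lemma IsReff.one_sub_card_div_mul_truncated_le [Fintype V] [DecidableEq V] [Fintype E]
    {a b : E → V} {e : E} {ρ R R' : ℝ} (hr : ∀ f, 0 < r f) (hρ : 0 < ρ)
    (hR : IsReff a b (fun f => (r f)⁻¹) (a e) (b e) R)
    (hR' : IsReff a b (truncatedConductance r (ρ * r e)) (a e) (b e) R') :
    (1 - Fintype.card E / ρ) * R' ≤ R := by
  have hc : ∀ f, 0 ≤ (r f)⁻¹ := fun f => inv_nonneg.mpr (hr f).le
  have hc' := truncatedConductance_nonneg hr (ρ * r e)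
  have hR₀ := hR.nonneg hc
  have hR'₀ := hR'.nonneg hc'
  have hloss : R' ≤ R + Fintype.card E / ρ * R' :=
    calc R' ≤ R * (1 + (∑ f, |(r f)⁻¹ - truncatedConductance r (ρ * r e) f|) * R') :=
          hR.le_mul_one_add_sum_abs_sub_mul hR' hc hc'
      _ ≤ R * (1 + Fintype.card E * (ρ * r e)⁻¹ * R') := by
          gcongr
          exact sum_abs_inv_sub_truncatedConductance_le (mul_pos hρ (hr e))
      _ = R + Fintype.card E / ρ * R' * ((r e)⁻¹ * R) := by rw [mul_inv]; ring
      _ ≤ R + Fintype.card E / ρ * R' := by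
          refine (add_le_add_iff_left R).mpr (mul_le_of_le_one_right (by positivity) ?_)
          exact hR.conductance_mul_le_one hc
  linarith

end Truncation

section Estimates

variable {t R R' : ℝ}

lemma le_one_div_one_sub_sq_mul (ht₀ : 0 ≤ t) (ht₁ : t < 1) (hR : 0 ≤ R)
    (h : (1 - t) * R' ≤ R) : R' ≤ (1 / (1 - t)) ^ 2 * R := by
  have hpos : 0 < 1 - t := sub_pos.mpr ht₁
  have hone : 1 ≤ 1 / (1 - t) := (one_le_div hpos).mpr (by linarith)
  calc R' ≤ R / (1 - t) := (le_div_iff₀' hpos).mpr h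
    _ = 1 / (1 - t) * R := by ring
    _ ≤ (1 / (1 - t)) ^ 2 * R := by
        gcongr
        exact le_self_pow₀ hone two_ne_zero

lemma le_one_add_two_mul_mul (ht₀ : 0 ≤ t) (ht : t ≤ 1 / 2) (hR : 0 ≤ R)
    (h : (1 - t) * R' ≤ R) : R' ≤ (1 + 2 * t) * R := by
  have hone : 1 ≤ (1 - t) * (1 + 2 * t) := by nlinarith
  refine le_of_mul_le_mul_left ?_ (show 0 < 1 - t by linarith)
  calc (1 - t) * R' ≤ R := h
    _ ≤ (1 - t) * (1 + 2 * t) * R := le_mul_of_one_le_left hR hone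
    _ = (1 - t) * ((1 + 2 * t) * R) := by ring

lemma div_div_pow_succ_le {m ε : ℝ} (hm : 0 < m) (hε₀ : 0 < ε) (hε₁ : ε ≤ 1) (n : ℕ) :
    m / (m / ε) ^ (n + 1) ≤ ε / m ^ n := by
  have heq : m / (m / ε) ^ (n + 1) = ε ^ (n + 1) / m ^ n := by
    rw [div_pow, pow_succ m]
    field_simp
  rw [heq]
  gcongr
  exact pow_le_of_le_one hε₀.le hε₁ n.succ_ne_zero

lemma div_pow_le_half {m ε : ℝ} (hm : 2 ≤ m) (hε : ε ≤ 1) {n : ℕ} (hn : n ≠ 0) :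
    ε / m ^ n ≤ 1 / 2 :=
  div_le_div₀ zero_le_one hε two_pos (hm.trans (le_self_pow₀ (by linarith) hn))

end Estimates

theorem reff_after_deleting_high_resistance_edges_general
    {V E : Type*} [Fintype V] [DecidableEq V] [Fintype E]
    (a b : E → V) (r : E → ℝ) (hr : ∀ f, 0 < r f)
    (e : E) (ρ : ℝ) (hρ : (Fintype.card E : ℝ) < ρ)
    (Lp Lp' : Matrix V V ℝ)
    (hLp : IsMPInv (lapM a b fun f => (r f)⁻¹) Lp)
    (hLp' : IsMPInv (lapM a b fun f => if r f ≤ ρ * r e then (r f)⁻¹ else 0) Lp') :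
    r e ≤ ρ * r e
    ∧ incv (a e) (b e) ⬝ᵥ Lp.mulVec (incv (a e) (b e))
        ≤ incv (a e) (b e) ⬝ᵥ Lp'.mulVec (incv (a e) (b e))
    ∧ incv (a e) (b e) ⬝ᵥ Lp'.mulVec (incv (a e) (b e))
        ≤ (1 / (1 - (Fintype.card E : ℝ) / ρ))^2
            * (incv (a e) (b e) ⬝ᵥ Lp.mulVec (incv (a e) (b e)))
    ∧ (∀ ε : ℝ, 0 < ε → ε < 1 → 2 ≤ Fintype.card E →
        ρ = ((Fintype.card E : ℝ) / ε)^10 →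
        incv (a e) (b e) ⬝ᵥ Lp'.mulVec (incv (a e) (b e))
          ≤ (1 + 2 * ε / (Fintype.card E : ℝ)^9)
              * (incv (a e) (b e) ⬝ᵥ Lp.mulVec (incv (a e) (b e)))) := by
  have hm : (1 : ℝ) ≤ Fintype.card E := by exact_mod_cast Fintype.card_pos_iff.mpr ⟨e⟩
  have hρ₀ : 0 < ρ := by linarith
  have hkeep : r e ≤ ρ * r e := le_mul_of_one_le_left (hr e).le (by linarith)
  have hc : ∀ f, 0 ≤ (r f)⁻¹ := fun f => inv_nonneg.mpr (hr f).le
  have hc' := truncatedConductance_nonneg hr (ρ * r e)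
  have hreff := isReff_of_isMPInv hc (inv_pos.mpr (hr e)) hLp
  have hreff' := isReff_of_isMPInv hc' (e := e)
    ((truncatedConductance_of_le hkeep).symm ▸ inv_pos.mpr (hr e)) hLp'
  have hR := hreff.nonneg hc
  have hloss := hreff.one_sub_card_div_mul_truncated_le hr hρ₀ hreff'
  refine ⟨hkeep, hreff.le_of_conductance_le hreff' hc' (truncatedConductance_le_inv hr _),
    le_one_div_one_sub_sq_mul (by positivity) ((div_lt_one hρ₀).mpr hρ) hR hloss,
    fun ε hε₀ hε₁ hm₂ hρε => ?_⟩
  have hratio : Fintype.card E / ρ ≤ ε / (Fintype.card E : ℝ) ^ 9 :=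
    hρε ▸ div_div_pow_succ_le (by linarith) hε₀ hε₁.le 9
  have hhalf : ε / (Fintype.card E : ℝ) ^ 9 ≤ 1 / 2 :=
    div_pow_le_half (by exact_mod_cast hm₂) hε₁.le (by norm_num)
  refine (le_one_add_two_mul_mul (by positivity) (hratio.trans hhalf) hR hloss).trans ?_
  rw [mul_div_assoc]
  gcongr

/-- **Deleting very high resistance edges barely changes effective
resistance.**  If `I'` keeps only the edges of resistance at most `ρ r_e`
(`ρ > m`), then `e` survives and
`Reff_I e ≤ Reff_{I'} e ≤ (1/(1-m/ρ))² Reff_I e`; in particular for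
`ρ = (m/ε)^10` one gets the factor `1 + 2ε/m⁹`. -/
theorem reff_after_deleting_high_resistance_edges
    {V E : Type*} [Fintype V] [DecidableEq V] [Fintype E] [DecidableEq E]
    (a b : E → V) (r : E → ℝ) (hr : ∀ f, 0 < r f)
    (hconn : LapConnected (lapM a b fun f => (r f)⁻¹))
    (e : E) (ρ : ℝ) (hρ : (Fintype.card E : ℝ) < ρ)
    (Lp Lp' : Matrix V V ℝ)
    (hLp : IsMPInv (lapM a b fun f => (r f)⁻¹) Lp)
    (hLp' : IsMPInv (lapM a b fun f => if r f ≤ ρ * r e then (r f)⁻¹ else 0) Lp') :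
    r e ≤ ρ * r e
    ∧ incv (a e) (b e) ⬝ᵥ Lp.mulVec (incv (a e) (b e))
        ≤ incv (a e) (b e) ⬝ᵥ Lp'.mulVec (incv (a e) (b e))
    ∧ incv (a e) (b e) ⬝ᵥ Lp'.mulVec (incv (a e) (b e))
        ≤ (1 / (1 - (Fintype.card E : ℝ) / ρ))^2
            * (incv (a e) (b e) ⬝ᵥ Lp.mulVec (incv (a e) (b e)))
    ∧ (∀ ε : ℝ, 0 < ε → ε < 1 → 2 ≤ Fintype.card E →
        ρ = ((Fintype.card E : ℝ) / ε)^10 →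
        incv (a e) (b e) ⬝ᵥ Lp'.mulVec (incv (a e) (b e))
          ≤ (1 + 2 * ε / (Fintype.card E : ℝ)^9)
              * (incv (a e) (b e) ⬝ᵥ Lp.mulVec (incv (a e) (b e)))) :=
  reff_after_deleting_high_resistance_edges_general a b r hr e ρ hρ Lp Lp' hLp hLp'
end

section
/- (Subset spectral sparsification) Let G be a weighted graph with n vertices, F ⊆ E(G), and ε ∈ (0,1). Then there exists a weighted graph H on the same vertex set such that: (i) every edge of G outside F appears in H with unchanged weight; (ii) the number of edges of F that appear (reweighted) in H is at most (8 log n / ε^2)(1 + sum_{e ∈ F} lev_G(e)); and (iii) (1-ε) L_G ⪯ L_H ⪯ (1+ε) L_G in the Loewner order, hence (1-ε) d^T L_G^+ d ≤ d^T L_H^+ d ≤ (1+ε) d^T L_G^+ d for every d orthogonal to the all-ones vector (up to replacing 1±ε by 1/(1∓ε)). -/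
open Matrix

/-!
Write `A` for the part of the Laplacian `L` carried by `F`. Edges of `F` are picked one at a time,
as in the barrier method of Batson, Spielman and Srivastava: the partial sum `S` of reweighted edges
is kept between a lower and an upper barrier which move by fixed multiples of `A`, and
`tr (A M⁻¹)`, for `M` the distance from `S` to either barrier, stays bounded. By Sherman–Morrison
the price of adding `w v vᵀ` is explicit for each barrier, and averaging the prices over `F` with
the original weights produces an edge which both barriers can afford.

Both barriers start at distance proportional to `J = L + P`, where `P` is the orthogonal projection
onto `ker L`. Then `J⁻¹ = L⁺ + P`, so the initial potential is the total leverage of `F`, and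
compressing the resulting bounds to the range of `L` turns `J` back into `L`. The number of steps is
`O(ε⁻² ∑ e ∈ F, lev e)`, with no logarithm: `5 k / ε²` rounded up is below the stated bound as
`5 ≤ 8 log 2`.
-/

section VecMulVec

variable {R V : Type*} [CommSemiring R] [Fintype V]

lemma vecMulVec_mul_mul_vecMulVec (X : Matrix V V R) (u v w z : V → R) :
    vecMulVec u v * X * vecMulVec w z = (v ⬝ᵥ X *ᵥ w) • vecMulVec u z := by
  rw [vecMulVec_mul, vecMulVec_mul_vecMulVec, vecMulVec_smul, dotProduct_mulVec]

lemma dotProduct_mulVec_eq_trace (X : Matrix V V R) (u v : V → R) :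
    v ⬝ᵥ X *ᵥ u = (X * vecMulVec u v).trace := by
  rw [mul_vecMulVec, trace_vecMulVec, dotProduct_comm]

end VecMulVec

section PositiveDefinite

open scoped MatrixOrder ComplexOrder

variable {𝕜 V : Type*} [RCLike 𝕜]

lemma posDef_add_smul {A M : Matrix V V 𝕜} (hM : M.PosDef) (hA : 0 ≤ A) {δ : ℝ} (hδ : 0 ≤ δ) :
    (M + δ • A).PosDef :=
  hM.add_posSemidef ((nonneg_iff_posSemidef.1 hA).smul hδ)

variable [Fintype V]

lemma trace_mul_nonneg {A B : Matrix V V 𝕜} (hA : 0 ≤ A) (hB : 0 ≤ B) : 0 ≤ (A * B).trace := by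
  classical
  obtain ⟨K, rfl⟩ := CStarAlgebra.nonneg_iff_eq_star_mul_self.mp hB
  rw [star_eq_conjTranspose, ← Matrix.mul_assoc, trace_mul_comm, ← Matrix.mul_assoc]
  exact ((nonneg_iff_posSemidef.1 hA).mul_mul_conjTranspose_same K).trace_nonneg

lemma trace_mul_le_trace_mul_left {A B C : Matrix V V 𝕜} (hA : 0 ≤ A) (hBC : B ≤ C) :
    (A * B).trace ≤ (A * C).trace := by
  rw [← sub_nonneg, ← trace_sub, ← Matrix.mul_sub]
  exact trace_mul_nonneg hA (sub_nonneg.2 hBC)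

lemma trace_mul_pos_of_posDef {A M : Matrix V V 𝕜} (hA : 0 ≤ A) (hA0 : A ≠ 0)
    (hM : M.PosDef) : 0 < (A * M).trace := by
  classical
  obtain ⟨R, hR⟩ := CStarAlgebra.nonneg_iff_eq_star_mul_self.mp hM.posSemidef.nonneg
  have hR_unit : IsUnit R := by
    have := hM.isUnit
    rw [hR] at this
    exact isUnit_of_mul_isUnit_right this
  have htrace : (A * M).trace = (R * A * Rᴴ).trace := by
    rw [hR, star_eq_conjTranspose, trace_mul_comm, Matrix.mul_assoc, trace_mul_comm]
  have hRA : (R * A * Rᴴ).PosSemidef := (nonneg_iff_posSemidef.1 hA).mul_mul_conjTranspose_same R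
  refine htrace ▸ hRA.trace_nonneg.lt_of_ne' fun h => hA0 ?_
  rwa [hRA.trace_eq_zero_iff, ← star_eq_conjTranspose, hR_unit.star.mul_left_eq_zero,
    hR_unit.mul_right_eq_zero] at h

variable [DecidableEq V]

lemma inv_le_inv_of_posDef_of_le {M N : Matrix V V 𝕜} (hM : M.PosDef) (hMN : M ≤ N) :
    N⁻¹ ≤ M⁻¹ := by
  have hN : N.PosDef := by simpa using hM.add_posSemidef (le_iff.1 hMN)
  have := hM.isUnit.invertible
  have := hN.isUnit.invertible
  have := hM.inv.isUnit.invertible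
  -- The Schur complements of this block matrix are `N - M` and `M⁻¹ - N⁻¹`.
  have hblock : (fromBlocks N 1 1ᴴ M⁻¹).PosSemidef := by
    rw [hM.inv.fromBlocks₂₂]
    simpa using le_iff.1 hMN
  rw [hN.fromBlocks₁₁] at hblock
  simpa [le_iff] using hblock

lemma vecMulVec_self_le_smul {M : Matrix V V ℝ} (hM : M.PosDef) (v : V → ℝ) :
    vecMulVec v v ≤ (v ⬝ᵥ M⁻¹ *ᵥ v) • M := by
  rcases eq_or_ne v 0 with rfl | hv
  · simp
  set q := v ⬝ᵥ M⁻¹ *ᵥ v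
  have hq0 : 0 < q := by simpa using hM.inv.dotProduct_mulVec_pos hv
  have hdet := (isUnit_iff_isUnit_det M).1 hM.isUnit
  have hsq : vecMulVec v v * M⁻¹ * vecMulVec v v = q • vecMulVec v v := by
    rw [vecMulVec_mul_mul_vecMulVec]
  have hsymm : (q • 1 - M⁻¹ * vecMulVec v v)ᴴ = q • 1 - vecMulVec v v * M⁻¹ := by
    rw [conjTranspose_sub, conjTranspose_mul, hM.isHermitian.inv.eq]
    simp [transpose_vecMulVec]
  have hexpand : (q • 1 - M⁻¹ * vecMulVec v v)ᴴ * M * (q • 1 - M⁻¹ * vecMulVec v v) =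
      q • (q • M - vecMulVec v v) := by
    simp only [hsymm, Matrix.sub_mul, Matrix.mul_sub, Matrix.smul_mul, Matrix.mul_smul,
      Matrix.one_mul, Matrix.mul_one, nonsing_inv_mul_cancel_right _ _ hdet,
      mul_nonsing_inv _ hdet, hsq, smul_sub, ← Matrix.mul_assoc, sub_self, sub_zero]
  rw [← sub_nonneg, ← inv_smul_smul₀ hq0.ne' (q • M - vecMulVec v v), ← hexpand]
  exact smul_nonneg (inv_nonneg.2 hq0.le)
    (hM.posSemidef.conjTranspose_mul_mul_same _).nonneg

end PositiveDefinite

section ShermanMorrison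

variable {K V : Type*} [Field K] [Fintype V] [DecidableEq V]

lemma inv_add_vecMulVec {M : Matrix V V K} (hM : IsUnit M.det) {u v : V → K}
    (huv : 1 + v ⬝ᵥ M⁻¹ *ᵥ u ≠ 0) :
    (M + vecMulVec u v)⁻¹ =
      M⁻¹ - (1 + v ⬝ᵥ M⁻¹ *ᵥ u)⁻¹ • (M⁻¹ * vecMulVec u v * M⁻¹) := by
  set q := v ⬝ᵥ M⁻¹ *ᵥ u
  have hsq : vecMulVec u v * (M⁻¹ * vecMulVec u v * M⁻¹) = q • (vecMulVec u v * M⁻¹) := by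
    rw [← Matrix.mul_assoc, ← Matrix.mul_assoc, vecMulVec_mul_mul_vecMulVec, Matrix.smul_mul]
  refine inv_eq_right_inv ?_
  rw [Matrix.mul_sub, Matrix.add_mul, mul_nonsing_inv _ hM, Matrix.mul_smul, Matrix.add_mul, hsq,
    Matrix.mul_assoc, mul_nonsing_inv_cancel_left _ _ hM, ← one_smul K (vecMulVec u v * M⁻¹),
    smul_smul, ← add_smul, mul_one, smul_smul, inv_mul_cancel₀ huv, add_sub_cancel_right]

lemma trace_mul_inv_add_smul_vecMulVec (A : Matrix V V K) {M : Matrix V V K} (hM : IsUnit M.det)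
    {s : K} {v : V → K} (hs : 1 + s * (v ⬝ᵥ M⁻¹ *ᵥ v) ≠ 0) :
    (A * (M + s • vecMulVec v v)⁻¹).trace = (A * M⁻¹).trace -
      s * (v ⬝ᵥ (M⁻¹ * A * M⁻¹) *ᵥ v) / (1 + s * (v ⬝ᵥ M⁻¹ *ᵥ v)) := by
  have hsv : v ⬝ᵥ M⁻¹ *ᵥ (s • v) = s * (v ⬝ᵥ M⁻¹ *ᵥ v) := by
    rw [mulVec_smul, dotProduct_smul, smul_eq_mul]
  have hcycle : v ⬝ᵥ (M⁻¹ * A * M⁻¹) *ᵥ v = (A * (M⁻¹ * vecMulVec v v * M⁻¹)).trace := by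
    rw [dotProduct_mulVec_eq_trace, Matrix.mul_assoc, Matrix.mul_assoc, trace_mul_comm]
    simp only [Matrix.mul_assoc]
  rw [← smul_vecMulVec, inv_add_vecMulVec hM (by rwa [hsv]), hsv, hcycle, smul_vecMulVec]
  simp only [Matrix.mul_sub, Matrix.mul_smul, Matrix.smul_mul, trace_sub, trace_smul, smul_eq_mul]
  ring

end ShermanMorrison

section RankOneSum

variable {R ι V : Type*} [CommRing R]

/-- The weighted sum `∑ e ∈ s, c e • v e (v e)ᵀ` of outer squares; a weighted Laplacian is the case
where `v e` is the signed incidence vector of the edge `e`. -/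
def rankOneSum (s : Finset ι) (v : ι → V → R) (c : ι → R) : Matrix V V R :=
  ∑ e ∈ s, c e • vecMulVec (v e) (v e)

variable (s : Finset ι) (v : ι → V → R)

lemma rankOneSum_add (c c' : ι → R) :
    rankOneSum s v (c + c') = rankOneSum s v c + rankOneSum s v c' := by
  simp only [rankOneSum, Pi.add_apply, add_smul, Finset.sum_add_distrib]

lemma rankOneSum_smul (r : R) (c : ι → R) : rankOneSum s v (r • c) = r • rankOneSum s v c := by
  simp only [rankOneSum, Pi.smul_apply, smul_assoc, Finset.smul_sum]

lemma rankOneSum_single [DecidableEq ι] {s : Finset ι} {e : ι} (he : e ∈ s) (w : R) :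
    rankOneSum s v (Pi.single e w) = w • vecMulVec (v e) (v e) := by
  rw [rankOneSum, Finset.sum_eq_single_of_mem e he fun f _ hf => by simp [hf], Pi.single_eq_same]

lemma rankOneSum_piecewise [DecidableEq ι] {s t : Finset ι} (hst : s ⊆ t) (c c' : ι → R) :
    rankOneSum t v (s.piecewise c' c) =
      rankOneSum t v c + (rankOneSum s v c' - rankOneSum s v c) := by
  have hsdiff : rankOneSum (t \ s) v (s.piecewise c' c) = rankOneSum (t \ s) v c :=
    Finset.sum_congr rfl fun e he => by simp [(Finset.mem_sdiff.1 he).2]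
  have hs : rankOneSum s v (s.piecewise c' c) = rankOneSum s v c' :=
    Finset.sum_congr rfl fun e he => by simp [he]
  have hsplit (u : ι → R) : rankOneSum t v u = rankOneSum (t \ s) v u + rankOneSum s v u :=
    (Finset.sum_sdiff hst).symm
  rw [hsplit, hsdiff, hs, hsplit c]
  abel

variable [Fintype V]

lemma trace_rankOneSum_mul (c : ι → R) (X : Matrix V V R) :
    (rankOneSum s v c * X).trace = ∑ e ∈ s, c e * (v e ⬝ᵥ X *ᵥ v e) := by
  simp only [rankOneSum, Finset.sum_mul, trace_sum, Matrix.smul_mul, trace_smul, smul_eq_mul,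
    dotProduct_mulVec_eq_trace, trace_mul_comm X]

lemma mul_rankOneSum_mul_transpose (c : ι → R) (P : Matrix V V R) :
    P * rankOneSum s v c * Pᵀ = rankOneSum s (fun e => P *ᵥ v e) c := by
  simp only [rankOneSum, Finset.mul_sum, Finset.sum_mul, Matrix.mul_smul, Matrix.smul_mul,
    mul_vecMulVec, vecMulVec_mul, vecMul_transpose]

end RankOneSum

section RealRankOneSum

open scoped MatrixOrder

variable {ι V : Type*} {s : Finset ι} {v : ι → V → ℝ} {c : ι → ℝ}

lemma rankOneSum_nonneg [Finite V] (hc : ∀ e ∈ s, 0 ≤ c e) : 0 ≤ rankOneSum s v c :=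
  Finset.sum_nonneg fun e he =>
    ((posSemidef_vecMulVec_self_star (v e)).smul (hc e he)).nonneg

lemma rankOneSum_mono [Finite V] {t : Finset ι} (hst : s ⊆ t) (hc : ∀ e ∈ t, 0 ≤ c e) :
    rankOneSum s v c ≤ rankOneSum t v c :=
  Finset.sum_le_sum_of_subset_of_nonneg hst fun e he _ =>
    ((posSemidef_vecMulVec_self_star (v e)).smul (hc e he)).nonneg

lemma mulVec_eq_zero_of_trace_rankOneSum_mul_eq_zero [Fintype V] (hc : ∀ e ∈ s, 0 < c e)
    {Q : Matrix V V ℝ} (hQ : Q.PosSemidef) (htrace : (rankOneSum s v c * Q).trace = 0) {e : ι}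
    (he : e ∈ s) : Q *ᵥ v e = 0 := by
  have hterm : ∀ f ∈ s, 0 ≤ c f * (v f ⬝ᵥ Q *ᵥ v f) := fun f hf =>
    mul_nonneg (hc f hf).le (hQ.dotProduct_mulVec_nonneg (v f))
  rw [trace_rankOneSum_mul, Finset.sum_eq_zero_iff_of_nonneg hterm] at htrace
  exact (hQ.dotProduct_mulVec_zero_iff (v e)).1
    ((mul_eq_zero.1 (htrace e he)).resolve_left (hc e he).ne')

end RealRankOneSum

section Barrier

open scoped MatrixOrder

variable {V : Type*} [Fintype V] [DecidableEq V] {A M N : Matrix V V ℝ} {δ w x : ℝ} {v : V → ℝ}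

/-- The barrier potential `tr (A M⁻¹)` of a slack matrix `M`; for `A = 1` it is the sum of the
inverse distances of the eigenvalues to the barrier. -/
noncomputable def potential (A M : Matrix V V ℝ) : ℝ := (A * M⁻¹).trace

/-- The rate `tr (A M⁻¹ A M⁻¹)` at which the potential decreases when the slack `M` moves in the
direction `A`. -/
noncomputable def potentialDecay (A M : Matrix V V ℝ) : ℝ := (A * M⁻¹ * A * M⁻¹).trace

/-- The slack `M` stays on the right side of the barrier, with potential at most `x`. -/
def IsBarrier (A M : Matrix V V ℝ) (x : ℝ) : Prop := M.PosDef ∧ potential A M ≤ x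

/-- The price of `v vᵀ` at the upper barrier: `w v vᵀ` may be added, without raising the potential,
as soon as `w * upperCost A M δ v < 1`. Here `M` is the slack after the barrier has moved by
`δ A`. -/
noncomputable def upperCost (A M : Matrix V V ℝ) (δ : ℝ) (v : V → ℝ) : ℝ :=
  v ⬝ᵥ M⁻¹ *ᵥ v + v ⬝ᵥ (M⁻¹ * A * M⁻¹) *ᵥ v / (δ * potentialDecay A M)

/-- The value of `v vᵀ` at the lower barrier: adding `w v vᵀ` makes up for the increase of the
potential as soon as `1 ≤ w * lowerCost A M δ v`. Here `M` is the slack after the barrier has moved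
by `δ A`. -/
noncomputable def lowerCost (A M : Matrix V V ℝ) (δ : ℝ) (v : V → ℝ) : ℝ :=
  v ⬝ᵥ (M⁻¹ * A * M⁻¹) *ᵥ v / (δ * potentialDecay A M) - v ⬝ᵥ M⁻¹ *ᵥ v

lemma potential_nonneg (hA : 0 ≤ A) (hM : M.PosDef) : 0 ≤ potential A M :=
  trace_mul_nonneg hA hM.inv.posSemidef.nonneg

lemma potential_antitone (hA : 0 ≤ A) (hM : M.PosDef) (hMN : M ≤ N) :
    potential A N ≤ potential A M :=
  trace_mul_le_trace_mul_left hA (inv_le_inv_of_posDef_of_le hM hMN)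

lemma potential_smul (A : Matrix V V ℝ) (hM : IsUnit M) {r : ℝ} (hr : r ≠ 0) :
    potential A (r • M) = potential A M / r := by
  have := invertibleOfNonzero hr
  rw [potential, inv_smul _ _ ((isUnit_iff_isUnit_det M).1 hM), Matrix.mul_smul, trace_smul,
    invOf_eq_inv, smul_eq_mul, inv_mul_eq_div, potential]

lemma inv_conj_nonneg (hA : 0 ≤ A) (hM : M.PosDef) : 0 ≤ A * M⁻¹ * A := by
  have := hM.inv.posSemidef.mul_mul_conjTranspose_same A
  rw [(nonneg_iff_posSemidef.1 hA).isHermitian.eq] at this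
  exact this.nonneg

lemma potentialDecay_pos (hA : 0 ≤ A) (hA0 : A ≠ 0) (hM : M.PosDef) : 0 < potentialDecay A M := by
  have hherm := (nonneg_iff_posSemidef.1 hA).isHermitian.eq
  have hsq : 0 < (Aᴴ * A * M⁻¹).trace :=
    trace_mul_pos_of_posDef (posSemidef_conjTranspose_mul_self A).nonneg
      (conjTranspose_mul_self_eq_zero.not.2 hA0) hM.inv
  refine trace_mul_pos_of_posDef (inv_conj_nonneg hA hM) (fun h => hsq.ne' ?_) hM.inv
  rw [hherm, trace_mul_comm, ← Matrix.mul_assoc, trace_mul_comm, ← Matrix.mul_assoc, h, trace_zero]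

lemma potential_sub_potential_add_smul (hM : IsUnit M) (hMA : IsUnit (M + δ • A)) :
    potential A M - potential A (M + δ • A) = δ * (A * M⁻¹ * A * (M + δ • A)⁻¹).trace := by
  rw [potential, potential, ← trace_sub, ← Matrix.mul_sub, inv_sub_inv (iff_of_true hM hMA),
    add_sub_cancel_left, Matrix.mul_smul, Matrix.smul_mul, Matrix.mul_smul, trace_smul,
    smul_eq_mul, ← Matrix.mul_assoc, ← Matrix.mul_assoc]

lemma le_potential_add_smul (hA : 0 ≤ A) (hM : M.PosDef) (hδ : 0 ≤ δ) :
    potential A M - δ * potentialDecay A M ≤ potential A (M + δ • A) := by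
  have hMA := posDef_add_smul hM hA hδ
  rw [sub_le_comm, potential_sub_potential_add_smul hM.isUnit hMA.isUnit]
  refine mul_le_mul_of_nonneg_left ?_ hδ
  exact trace_mul_le_trace_mul_left (inv_conj_nonneg hA hM)
    (inv_le_inv_of_posDef_of_le hM (le_add_of_nonneg_right (smul_nonneg hδ hA)))

lemma potential_add_smul_le (hA : 0 ≤ A) (hM : M.PosDef) (hδ : 0 ≤ δ) :
    potential A (M + δ • A) ≤ potential A M - δ * potentialDecay A (M + δ • A) := by
  have hMA := posDef_add_smul hM hA hδ
  have hcycle : (A * M⁻¹ * A * (M + δ • A)⁻¹).trace = (A * (M + δ • A)⁻¹ * A * M⁻¹).trace := by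
    rw [Matrix.mul_assoc, trace_mul_comm, ← Matrix.mul_assoc]
  rw [le_sub_comm, potential_sub_potential_add_smul hM.isUnit hMA.isUnit, hcycle]
  refine mul_le_mul_of_nonneg_left ?_ hδ
  exact trace_mul_le_trace_mul_left (inv_conj_nonneg hA hMA)
    (inv_le_inv_of_posDef_of_le hM (le_add_of_nonneg_right (smul_nonneg hδ hA)))

lemma potential_add_smul_vecMulVec (hM : M.PosDef) (hw : 1 + w * (v ⬝ᵥ M⁻¹ *ᵥ v) ≠ 0) :
    potential A (M + w • vecMulVec v v) = potential A M -
      w * (v ⬝ᵥ (M⁻¹ * A * M⁻¹) *ᵥ v) / (1 + w * (v ⬝ᵥ M⁻¹ *ᵥ v)) :=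
  trace_mul_inv_add_smul_vecMulVec A ((isUnit_iff_isUnit_det M).1 hM.isUnit) hw

lemma posDef_sub_smul_vecMulVec (hM : M.PosDef) (hw : 0 ≤ w) (hwv : w * (v ⬝ᵥ M⁻¹ *ᵥ v) < 1) :
    (M - w • vecMulVec v v).PosDef := by
  have hdecomp : M - w • vecMulVec v v = (1 - w * (v ⬝ᵥ M⁻¹ *ᵥ v)) • M +
      w • ((v ⬝ᵥ M⁻¹ *ᵥ v) • M - vecMulVec v v) := by module
  rw [hdecomp]
  exact posDef_add_smul (hM.smul (sub_pos.2 hwv)) (sub_nonneg.2 (vecMulVec_self_le_smul hM v)) hw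

lemma dotProduct_inv_conj_mulVec_nonneg (hA : 0 ≤ A) (hM : M.PosDef) (v : V → ℝ) :
    0 ≤ v ⬝ᵥ (M⁻¹ * A * M⁻¹) *ᵥ v := by
  have := ((nonneg_iff_posSemidef.1 hA).mul_mul_conjTranspose_same M⁻¹).dotProduct_mulVec_nonneg v
  rwa [hM.isHermitian.inv.eq] at this

lemma upperCost_nonneg (hA : 0 ≤ A) (hM : M.PosDef) (hδ : 0 ≤ δ) (v : V → ℝ) :
    0 ≤ upperCost A M δ v :=
  add_nonneg (hM.inv.posSemidef.dotProduct_mulVec_nonneg v)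
    (div_nonneg (dotProduct_inv_conj_mulVec_nonneg hA hM v)
      (mul_nonneg hδ (trace_mul_nonneg (inv_conj_nonneg hA hM) hM.inv.posSemidef.nonneg)))

lemma IsBarrier.sub_smul_vecMulVec (hM : IsBarrier A M x) (hA : 0 ≤ A) (hA0 : A ≠ 0) (hδ : 0 < δ)
    (hw : 0 ≤ w) (hcost : w * upperCost A (M + δ • A) δ v < 1) :
    IsBarrier A (M + δ • A - w • vecMulVec v v) x := by
  have hMA := posDef_add_smul hM.1 hA hδ.le
  have hmove : 0 < δ * potentialDecay A (M + δ • A) :=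
    mul_pos hδ (potentialDecay_pos hA hA0 hMA)
  have hpot := potential_add_smul_le hA hM.1 hδ.le
  have hh := dotProduct_inv_conj_mulVec_nonneg hA hMA v
  rw [upperCost, mul_add, ← mul_div_assoc] at hcost
  have hwq : w * (v ⬝ᵥ (M + δ • A)⁻¹ *ᵥ v) < 1 :=
    (le_add_of_nonneg_right (by positivity)).trans_lt hcost
  refine ⟨posDef_sub_smul_vecMulVec hMA hw hwq, ?_⟩
  rw [← lt_sub_iff_add_lt', div_lt_iff₀ hmove, ← div_lt_iff₀' (sub_pos.2 hwq)] at hcost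
  rw [sub_eq_add_neg, ← neg_smul, potential_add_smul_vecMulVec hMA (by linarith), neg_mul, neg_mul,
    neg_div, sub_neg_eq_add, ← sub_eq_add_neg]
  linarith [hM.2]

lemma IsBarrier.add_smul_vecMulVec (hM : IsBarrier A (M + δ • A) x) (hA : 0 ≤ A) (hA0 : A ≠ 0)
    (hMpos : M.PosDef) (hδ : 0 < δ) (hw : 0 ≤ w) (hcost : 1 ≤ w * lowerCost A M δ v) :
    IsBarrier A (M + w • vecMulVec v v) x := by
  have hmove : 0 < δ * potentialDecay A M := mul_pos hδ (potentialDecay_pos hA hA0 hMpos)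
  have hpot := le_potential_add_smul hA hMpos hδ.le
  have hq : 0 ≤ v ⬝ᵥ M⁻¹ *ᵥ v := hMpos.inv.posSemidef.dotProduct_mulVec_nonneg v
  have hwq : 0 < 1 + w * (v ⬝ᵥ M⁻¹ *ᵥ v) := by positivity
  refine ⟨posDef_add_smul hMpos (posSemidef_vecMulVec_self_star v).nonneg hw, ?_⟩
  rw [lowerCost, mul_sub, ← mul_div_assoc, le_sub_iff_add_le, le_div_iff₀' hmove,
    ← le_div_iff₀ hwq] at hcost
  rw [potential_add_smul_vecMulVec hMpos hwq.ne']
  linarith [hM.2]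

lemma le_potential_smul (hA : 0 ≤ A) (hM : M.PosDef) : A ≤ potential A M • M := by
  obtain ⟨K, hK⟩ := CStarAlgebra.nonneg_iff_eq_star_mul_self.mp hA
  have hrows : A = rankOneSum Finset.univ K.row 1 := by
    ext i j
    simp [hK, rankOneSum, mul_apply, vecMulVec_apply, Matrix.sum_apply, row]
  have hpot : potential A M = ∑ i, K.row i ⬝ᵥ M⁻¹ *ᵥ K.row i := by
    rw [potential, hrows, trace_rankOneSum_mul]
    simp
  rw [hpot, Finset.sum_smul, hrows, rankOneSum]
  simpa using Finset.sum_le_sum fun i (_ : i ∈ Finset.univ) => vecMulVec_self_le_smul hM (K.row i)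

lemma IsBarrier.smul_le_sub_smul (hM : IsBarrier A M x) (hA : 0 ≤ A) (hδ : 0 ≤ δ) :
    (1 - δ * x) • M ≤ M - δ • A := by
  have hAM : A ≤ x • M := (le_potential_smul hA hM.1).trans
    (smul_le_smul_of_nonneg_right hM.2 hM.1.posSemidef.nonneg)
  rw [sub_smul, one_smul, mul_smul]
  exact sub_le_sub_left (smul_le_smul_of_nonneg_left hAM hδ) M

lemma IsBarrier.sub_smul (hM : IsBarrier A M x) (hA : 0 ≤ A) (hδ : 0 ≤ δ) (hδx : δ * x < 1) :
    IsBarrier A (M - δ • A) (x / (1 - δ * x)) := by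
  have hscaled : ((1 - δ * x) • M).PosDef := hM.1.smul (sub_pos.2 hδx)
  have hle := hM.smul_le_sub_smul hA hδ
  refine ⟨by simpa using hscaled.add_posSemidef (le_iff.1 hle), ?_⟩
  refine (potential_antitone hA hscaled hle).trans ?_
  rw [potential_smul _ hM.1.isUnit (sub_pos.2 hδx).ne']
  exact div_le_div_of_nonneg_right hM.2 (sub_pos.2 hδx).le

lemma sum_upperCost {ι : Type*} {s : Finset ι} {c : ι → ℝ} {v : ι → V → ℝ}
    (hdecay : potentialDecay (rankOneSum s v c) M ≠ 0) :
    ∑ e ∈ s, c e * upperCost (rankOneSum s v c) M δ (v e) =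
      potential (rankOneSum s v c) M + 1 / δ := by
  simp only [upperCost, mul_add, Finset.sum_add_distrib, ← mul_div_assoc, ← Finset.sum_div,
    ← trace_rankOneSum_mul]
  rw [potential, ← Matrix.mul_assoc, ← Matrix.mul_assoc, ← potentialDecay,
    div_mul_cancel_right₀ hdecay, one_div]

lemma sum_lowerCost {ι : Type*} {s : Finset ι} {c : ι → ℝ} {v : ι → V → ℝ}
    (hdecay : potentialDecay (rankOneSum s v c) M ≠ 0) :
    ∑ e ∈ s, c e * lowerCost (rankOneSum s v c) M δ (v e) =
      1 / δ - potential (rankOneSum s v c) M := by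
  simp only [lowerCost, mul_sub, Finset.sum_sub_distrib, ← mul_div_assoc, ← Finset.sum_div,
    ← trace_rankOneSum_mul]
  rw [potential, ← Matrix.mul_assoc, ← Matrix.mul_assoc, ← potentialDecay,
    div_mul_cancel_right₀ hdecay, one_div]

end Barrier

section Sparsification

open scoped MatrixOrder

variable {ι V : Type*} [Fintype V] [DecidableEq V] {s : Finset ι} {v : ι → V → ℝ} {c : ι → ℝ}
  {M N : Matrix V V ℝ} {δU δL x : ℝ}

lemma exists_upperCost_lt_lowerCost (hc : ∀ e ∈ s, 0 ≤ c e) (hA0 : rankOneSum s v c ≠ 0)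
    (hM : IsBarrier (rankOneSum s v c) M x) (hN : IsBarrier (rankOneSum s v c) N x)
    (hδU : 0 < δU) (hδL : 0 ≤ δL) (hδLx : δL * x < 1)
    (hbudget : x + 1 / δU + x / (1 - δL * x) < 1 / δL) :
    ∃ e ∈ s, upperCost (rankOneSum s v c) (M + δU • rankOneSum s v c) δU (v e) <
      lowerCost (rankOneSum s v c) (N - δL • rankOneSum s v c) δL (v e) := by
  have hA := rankOneSum_nonneg (v := v) hc
  set A := rankOneSum s v c
  have hMA := posDef_add_smul hM.1 hA hδU.le
  have hNA := hN.sub_smul hA hδL hδLx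
  have hupper : ∑ e ∈ s, c e * upperCost A (M + δU • A) δU (v e) ≤ x + 1 / δU := by
    rw [sum_upperCost (potentialDecay_pos hA hA0 hMA).ne']
    have := potential_antitone hA hM.1 (le_add_of_nonneg_right (smul_nonneg hδU.le hA))
    linarith [hM.2]
  have hlower : 1 / δL - x / (1 - δL * x) ≤ ∑ e ∈ s, c e * lowerCost A (N - δL • A) δL (v e) := by
    rw [sum_lowerCost (potentialDecay_pos hA hA0 hNA.1).ne']
    linarith [hNA.2]
  obtain ⟨e, he, hlt⟩ := Finset.exists_lt_of_sum_lt
    (hupper.trans_lt ((lt_sub_iff_add_lt.2 hbudget).trans_le hlower))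
  exact ⟨e, he, lt_of_mul_lt_mul_left hlt (hc e he)⟩

lemma exists_barrier_step (hc : ∀ e ∈ s, 0 ≤ c e) (hA0 : rankOneSum s v c ≠ 0)
    (hM : IsBarrier (rankOneSum s v c) M x) (hN : IsBarrier (rankOneSum s v c) N x)
    (hδU : 0 < δU) (hδL : 0 < δL) (hδLx : δL * x < 1)
    (hbudget : x + 1 / δU + x / (1 - δL * x) < 1 / δL) :
    ∃ e ∈ s, ∃ w : ℝ, 0 ≤ w ∧
      IsBarrier (rankOneSum s v c) (M + δU • rankOneSum s v c - w • vecMulVec (v e) (v e)) x ∧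
      IsBarrier (rankOneSum s v c) (N - δL • rankOneSum s v c + w • vecMulVec (v e) (v e)) x := by
  obtain ⟨e, he, hlt⟩ := exists_upperCost_lt_lowerCost hc hA0 hM hN hδU hδL.le hδLx hbudget
  have hA := rankOneSum_nonneg (v := v) hc
  set A := rankOneSum s v c
  have hNA := (hN.sub_smul hA hδL.le hδLx).1
  have hupper : 0 ≤ upperCost A (M + δU • A) δU (v e) :=
    upperCost_nonneg hA (posDef_add_smul hM.1 hA hδU.le) hδU.le (v e)
  have hlower := hupper.trans_lt hlt
  refine ⟨e, he, (lowerCost A (N - δL • A) δL (v e))⁻¹, inv_nonneg.2 hlower.le, ?_, ?_⟩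
  · exact hM.sub_smul_vecMulVec hA hA0 hδU (inv_nonneg.2 hlower.le) ((inv_mul_lt_one₀ hlower).2 hlt)
  · exact IsBarrier.add_smul_vecMulVec (by simpa using hN) hA hA0 hNA hδL
      (inv_nonneg.2 hlower.le) (inv_mul_cancel₀ hlower.ne').ge

theorem exists_barrier_weights (hc : ∀ e ∈ s, 0 ≤ c e) (hA0 : rankOneSum s v c ≠ 0)
    (hM : IsBarrier (rankOneSum s v c) M x) (hN : IsBarrier (rankOneSum s v c) N x)
    (hδU : 0 < δU) (hδL : 0 < δL) (hδLx : δL * x < 1)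
    (hbudget : x + 1 / δU + x / (1 - δL * x) < 1 / δL) (t : ℕ) :
    ∃ u : ι → ℝ, (∀ e, 0 ≤ u e) ∧ (s.filter fun e => u e ≠ 0).card ≤ t ∧
      IsBarrier (rankOneSum s v c) (M + (t * δU) • rankOneSum s v c - rankOneSum s v u) x ∧
      IsBarrier (rankOneSum s v c) (N - (t * δL) • rankOneSum s v c + rankOneSum s v u) x := by
  classical
  induction t with
  | zero =>
    exact ⟨0, by simp, by simp, by simpa [rankOneSum] using hM, by simpa [rankOneSum] using hN⟩
  | succ t ih =>
    obtain ⟨u, hu, hcard, hMu, hNu⟩ := ih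
    obtain ⟨e, he, w, hw, hMw, hNw⟩ := exists_barrier_step hc hA0 hMu hNu hδU hδL hδLx hbudget
    have hsingle : (0 : ι → ℝ) ≤ Pi.single e w := Pi.single_nonneg.2 hw
    refine ⟨u + Pi.single e w, fun f => add_nonneg (hu f) (hsingle f), ?_, ?_, ?_⟩
    · have hsubset : (s.filter fun f => (u + Pi.single e w : ι → ℝ) f ≠ 0) ⊆
          insert e (s.filter fun f => u f ≠ 0) := by
        intro f hf
        by_cases hfe : f = e <;> simp_all
      exact (Finset.card_le_card hsubset).trans ((Finset.card_insert_le _ _).trans (by lia))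
    · convert hMw using 1
      rw [rankOneSum_add, rankOneSum_single v he]
      push_cast
      module
    · convert hNw using 1
      rw [rankOneSum_add, rankOneSum_single v he]
      push_cast
      module

lemma barrier_budget {x y : ℝ} (hx0 : 0 ≤ x) (hxy : x ≤ 4 * y / 5) (hy0 : 0 < y) (hy1 : y < 1) :
    x + 1 / (1 + y) + x / (1 - (1 - y) * x) < 1 / (1 - y) := by
  have hden : 4 / 5 ≤ 1 - (1 - y) * x := by nlinarith [sq_nonneg (1 - 2 * y)]
  have hx : x / (1 - (1 - y) * x) ≤ y := by
    rw [div_le_iff₀ (by linarith)]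
    nlinarith
  have hgap : 1 / (1 - y) - 1 / (1 + y) = 2 * y / (1 - y ^ 2) := by
    have : 1 - y ≠ 0 := by linarith
    have : 1 - y ^ 2 ≠ 0 := by nlinarith
    field_simp
    ring
  have hgap_gt : 2 * y < 2 * y / (1 - y ^ 2) := by
    rw [lt_div_iff₀ (by nlinarith)]
    nlinarith [pow_pos hy0 3]
  linarith

lemma exists_sparse_rankOneSum_of_le (hc : ∀ e ∈ s, 0 ≤ c e)
    (hA0 : rankOneSum s v c ≠ 0) {J : Matrix V V ℝ} (hJ : J.PosDef) {y : ℝ} (hy0 : 0 < y)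
    (hy1 : y < 1) {T : ℕ} (hkT : 5 * potential (rankOneSum s v c) J / (4 * y ^ 2) ≤ T) :
    ∃ w : ι → ℝ, (∀ e, 0 ≤ w e) ∧ (s.filter fun e => w e ≠ 0).card ≤ T ∧
      (1 - y) • rankOneSum s v c - y • J ≤ rankOneSum s v w ∧
      rankOneSum s v w ≤ (1 + y) • rankOneSum s v c + y • J := by
  have hk : 0 < potential (rankOneSum s v c) J :=
    trace_mul_pos_of_posDef (rankOneSum_nonneg hc) hA0 hJ.inv
  set k := potential (rankOneSum s v c) J
  have hT : 0 < (T : ℝ) := lt_of_lt_of_le (by positivity) hkT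
  have hx0 : 0 ≤ k / (y * T) := by positivity
  have hx : k / (y * T) ≤ 4 * y / 5 := by
    rw [div_le_iff₀ (by positivity)] at hkT ⊢
    nlinarith
  have hstart : IsBarrier (rankOneSum s v c) ((y * T) • J) (k / (y * T)) :=
    ⟨hJ.smul (by positivity), (potential_smul _ hJ.isUnit (by positivity)).le⟩
  obtain ⟨u, hu, hcard, hupper, hlower⟩ := exists_barrier_weights hc hA0 hstart hstart
    (by linarith : 0 < 1 + y) (sub_pos.2 hy1) (by nlinarith) (barrier_budget hx0 hx hy0 hy1) T
  have nonneg_of_smul (B : Matrix V V ℝ) (hB : 0 ≤ (T : ℝ) • B) : 0 ≤ B := by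
    simpa [hT.ne'] using smul_nonneg (inv_nonneg.2 hT.le) hB
  refine ⟨(T : ℝ)⁻¹ • u, fun e => mul_nonneg (inv_nonneg.2 hT.le) (hu e), ?_, ?_, ?_⟩
  · simpa [hT.ne'] using hcard
  · refine sub_nonneg.1 (nonneg_of_smul _ ?_)
    convert hlower.1.posSemidef.nonneg using 1
    rw [rankOneSum_smul, smul_sub, smul_inv_smul₀ hT.ne']
    module
  · refine sub_nonneg.1 (nonneg_of_smul _ ?_)
    convert hupper.1.posSemidef.nonneg using 1
    rw [rankOneSum_smul, smul_sub, smul_inv_smul₀ hT.ne']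
    module

theorem exists_sparse_rankOneSum (hc : ∀ e ∈ s, 0 ≤ c e) {J : Matrix V V ℝ}
    (hJ : J.PosDef) {y : ℝ} (hy : 0 < y) :
    ∃ w : ι → ℝ, (∀ e, 0 ≤ w e) ∧
      (s.filter fun e => w e ≠ 0).card ≤ ⌈5 * potential (rankOneSum s v c) J / (4 * y ^ 2)⌉₊ ∧
      (1 - y) • rankOneSum s v c - y • J ≤ rankOneSum s v w ∧
      rankOneSum s v w ≤ (1 + y) • rankOneSum s v c + y • J := by
  have hA := rankOneSum_nonneg (v := v) hc
  by_cases hempty : (1 - y) • rankOneSum s v c ≤ 0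
  · have hyJ : 0 ≤ y • J := smul_nonneg hy.le hJ.posSemidef.nonneg
    refine ⟨0, fun _ => le_rfl, by simp, ?_, ?_⟩
    · simpa [rankOneSum] using hempty.trans hyJ
    · simpa [rankOneSum] using add_nonneg (smul_nonneg (by linarith) hA) hyJ
  have hy1 : y < 1 := not_le.1 fun h => hempty (smul_nonpos_of_nonpos_of_nonneg (by linarith) hA)
  have hA0 : rankOneSum s v c ≠ 0 := fun h => hempty (by simp [h])
  exact exists_sparse_rankOneSum_of_le hc hA0 hJ hy hy1 (Nat.le_ceil _)

end Sparsification

section PseudoInverse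

open scoped MatrixOrder

variable {V : Type*} [Fintype V] {L Lp : Matrix V V ℝ}

namespace IsMPInv

lemma mul_comm_of_isHermitian (h : IsMPInv L Lp) (hL : L.IsHermitian) : L * Lp = Lp * L := by
  have hLt : Lᵀ = L := hL
  obtain ⟨hLLpL, -, hLLp, hLpL⟩ := h
  have hleft : L * Lp = Lpᵀ * L := by rw [← hLLp, transpose_mul, hLt]
  have hright : Lp * L = L * Lpᵀ := by rw [← hLpL, transpose_mul, hLt]
  calc L * Lp = Lpᵀ * L := hleft
    _ = Lpᵀ * (L * Lp * L) := by rw [hLLpL]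
    _ = (Lpᵀ * L) * (Lp * L) := by simp only [Matrix.mul_assoc]
    _ = (L * Lp) * (L * Lpᵀ) := by rw [← hleft, hright]
    _ = L * Lpᵀ := by rw [← Matrix.mul_assoc, hLLpL]
    _ = Lp * L := hright.symm

lemma posSemidef_one_sub_mul [DecidableEq V] (h : IsMPInv L Lp) : (1 - L * Lp).PosSemidef := by
  have hsq : (1 - L * Lp)ᴴ * (1 - L * Lp) = 1 - L * Lp := by
    have hidem : L * Lp * (L * Lp) = L * Lp := by rw [← Matrix.mul_assoc, h.1]
    rw [conjTranspose_sub, conjTranspose_one, conjTranspose_eq_transpose_of_trivial, h.2.2.1,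
      Matrix.mul_sub, Matrix.sub_mul, Matrix.sub_mul, hidem]
    simp
  exact hsq ▸ posSemidef_conjTranspose_mul_self _

lemma mul_mulVec_eq_self {ι : Type*} [Fintype ι] {v : ι → V → ℝ} {c : ι → ℝ} (hc : ∀ e, 0 < c e)
    (h : IsMPInv (rankOneSum Finset.univ v c) Lp) (e : ι) :
    (rankOneSum Finset.univ v c * Lp) *ᵥ v e = v e := by
  classical
  have htrace : (rankOneSum Finset.univ v c * (1 - rankOneSum Finset.univ v c * Lp)).trace = 0 := by
    rw [trace_mul_comm, Matrix.sub_mul, Matrix.one_mul, h.1, sub_self, trace_zero]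
  have := mulVec_eq_zero_of_trace_rankOneSum_mul_eq_zero (fun e _ => hc e)
    h.posSemidef_one_sub_mul htrace (Finset.mem_univ e)
  rwa [sub_mulVec, one_mulVec, sub_eq_zero, eq_comm] at this

lemma conj_rankOneSum {ι : Type*} [Fintype ι] {v : ι → V → ℝ} {c : ι → ℝ}
    (hc : ∀ e, 0 < c e) (h : IsMPInv (rankOneSum Finset.univ v c) Lp) (s : Finset ι) (u : ι → ℝ) :
    rankOneSum Finset.univ v c * Lp * rankOneSum s v u * (rankOneSum Finset.univ v c * Lp)ᵀ =
      rankOneSum s v u := by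
  simp only [mul_rankOneSum_mul_transpose, h.mul_mulVec_eq_self hc]

variable [DecidableEq V]

lemma add_mul_add_eq_one (h : IsMPInv L Lp) (hL : L.IsHermitian) :
    (L + (1 - L * Lp)) * (Lp + (1 - L * Lp)) = 1 := by
  have hcomm := h.mul_comm_of_isHermitian hL
  have hLP : L * (L * Lp) = L := by rw [hcomm, ← Matrix.mul_assoc, h.1]
  have hPLp : L * Lp * Lp = Lp := by rw [hcomm, h.2.1]
  have hidem : L * Lp * (L * Lp) = L * Lp := by rw [← Matrix.mul_assoc, h.1]
  simp only [Matrix.add_mul, Matrix.mul_add, Matrix.sub_mul, Matrix.mul_sub, Matrix.one_mul,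
    Matrix.mul_one, hLP, hPLp, hidem]
  abel

lemma conj_add_one_sub_mul (h : IsMPInv L Lp) (hL : L.IsHermitian) :
    L * Lp * (L + (1 - L * Lp)) * (L * Lp)ᵀ = L := by
  have hidem : L * Lp * (L * Lp) = L * Lp := by rw [← Matrix.mul_assoc, h.1]
  have hLP : L * (L * Lp) = L := by rw [h.mul_comm_of_isHermitian hL, ← Matrix.mul_assoc, h.1]
  rw [h.2.2.1, Matrix.mul_add, h.1, Matrix.mul_sub, Matrix.mul_one, hidem, sub_self, add_zero, hLP]

lemma posDef_add_one_sub_mul (h : IsMPInv L Lp) (hL : L.PosSemidef) :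
    (L + (1 - L * Lp)).PosDef :=
  (hL.add h.posSemidef_one_sub_mul).posDef_iff_isUnit.2
    (IsUnit.of_mul_eq_one _ (h.add_mul_add_eq_one hL.isHermitian))

lemma inv_add_one_sub_mul (h : IsMPInv L Lp) (hL : L.IsHermitian) :
    (L + (1 - L * Lp))⁻¹ = Lp + (1 - L * Lp) :=
  inv_eq_right_inv (h.add_mul_add_eq_one hL)

end IsMPInv

end PseudoInverse

section SubsetSparsification

open scoped MatrixOrder

variable {E V : Type*} [Fintype E] [Fintype V] {v : E → V → ℝ} {c : E → ℝ} {Lp : Matrix V V ℝ}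

lemma potential_rankOneSum_eq_sum_leverage [DecidableEq V] (hc : ∀ e, 0 < c e)
    (hLp : IsMPInv (rankOneSum Finset.univ v c) Lp) (F : Finset E) :
    potential (rankOneSum F v c)
        (rankOneSum Finset.univ v c + (1 - rankOneSum Finset.univ v c * Lp)) =
      ∑ e ∈ F, c e * (v e ⬝ᵥ Lp *ᵥ v e) := by
  have hL := rankOneSum_nonneg (s := Finset.univ) (v := v) fun e _ => (hc e).le
  rw [potential, hLp.inv_add_one_sub_mul (nonneg_iff_posSemidef.1 hL).isHermitian,
    trace_rankOneSum_mul]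
  simp [add_mulVec, sub_mulVec, hLp.mul_mulVec_eq_self hc]

lemma sum_leverage_nonneg (hc : ∀ e, 0 < c e) (hLp : IsMPInv (rankOneSum Finset.univ v c) Lp)
    (F : Finset E) : 0 ≤ ∑ e ∈ F, c e * (v e ⬝ᵥ Lp *ᵥ v e) := by
  classical
  have hL := rankOneSum_nonneg (s := Finset.univ) (v := v) fun e _ => (hc e).le
  rw [← potential_rankOneSum_eq_sum_leverage hc hLp F]
  exact potential_nonneg (rankOneSum_nonneg fun e _ => (hc e).le)
    (hLp.posDef_add_one_sub_mul (nonneg_iff_posSemidef.1 hL))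

lemma exists_subset_approximation (hc : ∀ e, 0 < c e) (F : Finset E) {ε : ℝ} (hε : 0 < ε)
    (hLp : IsMPInv (rankOneSum Finset.univ v c) Lp) :
    ∃ w : E → ℝ, (∀ e, 0 ≤ w e) ∧
      (F.filter fun e => w e ≠ 0).card ≤ ⌈5 * (∑ e ∈ F, c e * (v e ⬝ᵥ Lp *ᵥ v e)) / ε ^ 2⌉₊ ∧
      rankOneSum F v c - ε • rankOneSum Finset.univ v c ≤ rankOneSum F v w ∧
      rankOneSum F v w ≤ rankOneSum F v c + ε • rankOneSum Finset.univ v c := by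
  classical
  set L := rankOneSum Finset.univ v c
  have hL : L.PosSemidef := nonneg_iff_posSemidef.1 (rankOneSum_nonneg fun e _ => (hc e).le)
  have hFL : (ε / 2) • rankOneSum F v c ≤ (ε / 2) • L := smul_le_smul_of_nonneg_left
    (rankOneSum_mono F.subset_univ fun e _ => (hc e).le) (half_pos hε).le
  have hprojF (u : E → ℝ) : L * Lp * rankOneSum F v u * (L * Lp)ᵀ = rankOneSum F v u :=
    hLp.conj_rankOneSum hc F u
  have hprojL := hLp.conj_add_one_sub_mul hL.isHermitian
  obtain ⟨w, hw, hcard, hlower, hupper⟩ := exists_sparse_rankOneSum (v := v) (s := F) (c := c)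
    (fun e _ => (hc e).le) (hLp.posDef_add_one_sub_mul hL) (half_pos hε)
  refine ⟨w, hw, ?_, ?_, ?_⟩
  · convert hcard using 2
    rw [potential_rankOneSum_eq_sum_leverage hc hLp]
    ring
  · have hproj := star_right_conjugate_le_conjugate hlower (L * Lp)
    simp only [star_eq_conjTranspose, conjTranspose_eq_transpose_of_trivial, Matrix.mul_sub,
      Matrix.sub_mul, Matrix.mul_smul, Matrix.smul_mul, hprojF, hprojL] at hproj
    refine le_trans ?_ hproj
    rw [← sub_nonneg] at hFL ⊢
    convert hFL using 1
    module
  · have hproj := star_right_conjugate_le_conjugate hupper (L * Lp)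
    rw [Matrix.mul_add, Matrix.add_mul] at hproj
    simp only [star_eq_conjTranspose, conjTranspose_eq_transpose_of_trivial, Matrix.mul_smul,
      Matrix.smul_mul, hprojF, hprojL] at hproj
    refine hproj.trans ?_
    rw [← sub_nonneg] at hFL ⊢
    convert hFL using 1
    module

theorem subset_spectral_sparsification_general (v : E → V → ℝ) {c : E → ℝ}
    (hc : ∀ e, 0 < c e) (F : Finset E) {ε : ℝ} (hε : 0 < ε) {Lp : Matrix V V ℝ}
    (hLp : IsMPInv (rankOneSum Finset.univ v c) Lp) :
    ∃ c' : E → ℝ,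
      (∀ e, 0 ≤ c' e) ∧
      (∀ e ∉ F, c' e = c e) ∧
      (F.filter fun e => c' e ≠ 0).card ≤ ⌈5 * (∑ e ∈ F, c e * (v e ⬝ᵥ Lp *ᵥ v e)) / ε ^ 2⌉₊ ∧
      (rankOneSum Finset.univ v c' - (1 - ε) • rankOneSum Finset.univ v c).PosSemidef ∧
      ((1 + ε) • rankOneSum Finset.univ v c - rankOneSum Finset.univ v c').PosSemidef := by
  classical
  obtain ⟨w, hw, hcard, hlower, hupper⟩ := exists_subset_approximation hc F hε hLp
  have hc' := rankOneSum_piecewise v F.subset_univ c w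
  refine ⟨F.piecewise w c, fun e => ?_, fun e he => F.piecewise_eq_of_notMem w c he, ?_, ?_, ?_⟩
  · by_cases he : e ∈ F <;> simp [he, hw e, (hc e).le]
  · convert hcard using 2
    exact Finset.filter_congr fun e he => by rw [F.piecewise_eq_of_mem w c he]
  · rw [← nonneg_iff_posSemidef, hc']
    convert sub_nonneg.2 hlower using 1
    module
  · rw [← nonneg_iff_posSemidef, hc']
    convert sub_nonneg.2 hupper using 1
    module

end SubsetSparsification

lemma ceil_le_log_bound {k ε : ℝ} {n : ℕ} (hn : 2 ≤ n) (hk : 0 ≤ k) (hε0 : 0 < ε) (hε1 : ε ≤ 1) :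
    (⌈5 * k / ε ^ 2⌉₊ : ℝ) ≤ 8 * Real.log n / ε ^ 2 * (1 + k) := by
  have hlog : 5 ≤ 8 * Real.log n := by
    have := Real.log_le_log two_pos (Nat.ofNat_le_cast.2 hn)
    linarith [Real.log_two_gt_d9]
  calc (⌈5 * k / ε ^ 2⌉₊ : ℝ) ≤ 5 * k / ε ^ 2 + 1 := (Nat.ceil_lt_add_one (by positivity)).le
    _ ≤ 5 * k / ε ^ 2 + 5 / ε ^ 2 := by
        gcongr
        rw [le_div_iff₀ (by positivity)]
        nlinarith
    _ = 5 / ε ^ 2 * (1 + k) := by ring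
    _ ≤ 8 * Real.log n / ε ^ 2 * (1 + k) := by gcongr

lemma ceil_sum_leverage_le {V E : Type*} [Fintype V] [DecidableEq V] [Fintype E] {a b : E → V}
    {c : E → ℝ} (hc : ∀ e, 0 < c e) {Lp : Matrix V V ℝ} (hLp : IsMPInv (lapM a b c) Lp)
    (F : Finset E) {ε : ℝ} (hε0 : 0 < ε) (hε1 : ε ≤ 1) :
    (⌈5 * (∑ e ∈ F, c e * (incv (a e) (b e) ⬝ᵥ Lp *ᵥ incv (a e) (b e))) / ε ^ 2⌉₊ : ℝ) ≤
      8 * Real.log (Fintype.card V) / ε ^ 2 *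
        (1 + ∑ e ∈ F, c e * (incv (a e) (b e) ⬝ᵥ Lp *ᵥ incv (a e) (b e))) := by
  rcases subsingleton_or_nontrivial V with hV | hV
  · have hincv (x y : V) : incv x y = 0 := by
      rw [Subsingleton.elim x y]
      exact funext fun v => sub_self _
    simp only [hincv, zero_dotProduct, mul_zero, Finset.sum_const_zero, zero_div, Nat.ceil_zero,
      Nat.cast_zero, add_zero, mul_one]
    positivity
  · exact ceil_le_log_bound Fintype.one_lt_card
      (sum_leverage_nonneg (v := fun e => incv (a e) (b e)) hc hLp F) hε0 hε1

/-- **Subset spectral sparsification.**  The edges of `F` can be resampled and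
reweighted (keeping all other edges untouched) so that only
`(8 log n / ε²)(1 + ∑_{e∈F} lev_G e)` of them survive while the Laplacian is
preserved up to a `(1 ± ε)` factor in the Loewner order. -/
theorem subset_spectral_sparsification
    {V E : Type*} [Fintype V] [DecidableEq V] [Fintype E] [DecidableEq E]
    (a b : E → V) (c : E → ℝ) (hc : ∀ e, 0 < c e) (F : Finset E)
    (ε : ℝ) (hε0 : 0 < ε) (hε1 : ε < 1)
    (Lp : Matrix V V ℝ) (hLp : IsMPInv (lapM a b c) Lp) :
    ∃ c' : E → ℝ,
      (∀ e, 0 ≤ c' e) ∧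
      (∀ e ∉ F, c' e = c e) ∧
      ((F.filter fun e => c' e ≠ 0).card : ℝ)
        ≤ (8 * Real.log (Fintype.card V) / ε^2)
            * (1 + ∑ e ∈ F, c e * (incv (a e) (b e) ⬝ᵥ Lp.mulVec (incv (a e) (b e)))) ∧
      (lapM a b c' - (1 - ε) • lapM a b c).PosSemidef ∧
      ((1 + ε) • lapM a b c - lapM a b c').PosSemidef := by
  obtain ⟨c', hnonneg, hkeep, hcard, hlower, hupper⟩ :=
    subset_spectral_sparsification_general (fun e => incv (a e) (b e)) hc F hε0 hLp
  exact ⟨c', hnonneg, hkeep,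
    (Nat.cast_le.2 hcard).trans (ceil_sum_leverage_le hc hLp F hε0 hε1.le), hlower, hupper⟩
end

section
/- (Greedy spanner) Every unweighted graph G on n vertices and any integer k ≥ 1 admits a subgraph H with at most n^{1 + 1/k} + n edges such that for every pair of vertices u,v, d_H(u,v) ≤ (2k - 1) d_G(u,v), where d denotes shortest-path distance. In particular, taking k = ⌈log n⌉ gives a spanner with O(n log n) edges and stretch at most 2 log n + 1. -/
/-!
Take `H ≤ G` maximal among the subgraphs of girth greater than `2 * k`; this is what the greedy
algorithm produces, whatever the order of the edges. An edge `uv` of `G` missing from `H` closes a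
cycle of length at most `2 * k` when added to `H`, so `u` and `v` are already at distance at most
`2 * k - 1` in `H`, and the triangle inequality propagates this stretch from edges to all pairs.

The number of edges of `H` is controlled by the Moore bound: a graph with more than `d * n` edges
has a nonempty subgraph of minimum degree greater than `d`, in which, if the girth exceeds `2 * k`,
the ball of radius `k` around a vertex is a tree whose levels grow by a factor of at least `d`.
Hence `d ^ k ≤ n`, which fails for `d = ⌊n ^ (1 / k)⌋ + 1`.
-/

section Spanner

open SimpleGraph Finset

variable {V : Type*} {G H : SimpleGraph V} {a u v w w' x : V} {t i d k : ℕ}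

/-- `H` is a `t`-spanner of `G`: a spanning subgraph that stretches distances by a factor of at most
`t`. Distances are extended, so that `H` has to connect the pairs that `G` connects, while for
`t ≠ 0` the other pairs impose no condition (but `0 * ⊤ = 0`). -/
structure IsSpanner (t : ℕ) (H G : SimpleGraph V) : Prop where
  le : H ≤ G
  edist_le (u v : V) : H.edist u v ≤ t * G.edist u v

namespace IsSpanner

theorem of_forall_adj (ht : t ≠ 0) (hle : H ≤ G) (hadj : ∀ ⦃u v⦄, G.Adj u v → H.edist u v ≤ t) :
    IsSpanner t H G := by
  refine ⟨hle, fun u v ↦ ?_⟩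
  have hwalk {u v : V} (p : G.Walk u v) : H.edist u v ≤ t * p.length := by
    induction p with
    | nil => simp
    | @cons u v w huv p ih =>
      calc H.edist u w ≤ H.edist u v + H.edist v w := H.edist_triangle
        _ ≤ t + t * p.length := add_le_add (hadj huv) ih
        _ = t * (p.cons huv).length := by rw [Walk.length_cons]; push_cast; ring
  by_cases huv : G.Reachable u v
  · obtain ⟨p, hp⟩ := huv.exists_walk_length_eq_edist
    exact hp ▸ hwalk p
  · rw [edist_eq_top_of_not_reachable huv, ENat.mul_top (by exact_mod_cast ht)]
    exact le_top

theorem reachable (h : IsSpanner t H G) (huv : G.Reachable u v) : H.Reachable u v := by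
  refine reachable_of_edist_ne_top (ne_top_of_le_ne_top ?_ (h.edist_le u v))
  rw [← huv.coe_dist_eq_edist, ← Nat.cast_mul]
  exact ENat.natCast_ne_top _

theorem dist_le (h : IsSpanner t H G) (u v : V) : H.dist u v ≤ t * G.dist u v := by
  by_cases huv : G.Reachable u v
  · have := h.edist_le u v
    rw [← huv.coe_dist_eq_edist, ← (h.reachable huv).coe_dist_eq_edist] at this
    exact_mod_cast this
  · rw [dist_eq_zero_of_not_reachable fun hH ↦ huv (hH.mono h.le)]
    exact Nat.zero_le _

end IsSpanner

theorem edist_deleteEdges_add_one_le_length {c : G.Walk a a} (hc : c.IsTrail)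
    (huv : s(u, v) ∈ c.edges) : (G.deleteEdges {s(u, v)}).edist u v + 1 ≤ c.length := by
  classical
  have hne : u ≠ v := (c.adj_of_mem_edges huv).ne
  have hu := c.fst_mem_support_of_mem_edges huv
  rw [← c.length_rotate u hu]
  replace huv := (c.rotate_edges u hu).mem_iff.mpr huv
  replace hc := (Walk.isTrail_rotate hu).mpr hc
  generalize c.rotate u hu = c at hc huv
  -- `v` cuts the closed trail into two walks between `u` and `v`, of which only one uses the edge.
  have hv := c.snd_mem_support_of_mem_edges huv
  have havoid {b b' : V} (p : G.Walk b b') (hp : s(u, v) ∉ p.edges) :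
      (G.deleteEdges {s(u, v)}).edist b b' ≤ p.length := by
    simpa using (p.toDeleteEdge s(u, v) hp).edist_le
  have hdisj := hc.disjoint_edges_takeUntil_dropUntil hv
  rw [← c.take_spec hv, Walk.length_append, Nat.cast_add]
  generalize c.takeUntil v hv = p at hdisj ⊢
  generalize c.dropUntil v hv = q at hdisj ⊢
  by_cases hp : s(u, v) ∈ p.edges
  · have hpos : 1 ≤ p.length := p.length_edges ▸ List.length_pos_of_mem hp
    rw [add_comm, edist_comm]
    exact add_le_add (by exact_mod_cast hpos) (havoid q fun hq ↦ hdisj hp hq)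
  · have hpos : 1 ≤ q.length := Nat.one_le_iff_ne_zero.mpr fun hq ↦
      hne (q.eq_of_length_eq_zero hq).symm
    exact add_le_add (havoid p hp) (by exact_mod_cast hpos)

theorem min_egirth_edist_add_one_le_egirth_sup_edge (H : SimpleGraph V) (u v : V) :
    min H.egirth (H.edist u v + 1) ≤ (H ⊔ edge u v).egirth := by
  refine le_egirth.mpr fun a c hc ↦ ?_
  have hle : (H ⊔ edge u v).deleteEdges {s(u, v)} ≤ H := by
    simp [deleteEdges_sup]
  by_cases huv : s(u, v) ∈ c.edges
  · calc min H.egirth (H.edist u v + 1) ≤ H.edist u v + 1 := min_le_right _ _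
      _ ≤ ((H ⊔ edge u v).deleteEdges {s(u, v)}).edist u v + 1 := by grw [edist_anti hle]
      _ ≤ c.length := edist_deleteEdges_add_one_le_length hc.isTrail huv
  · have hedges (e : Sym2 V) (he : e ∈ c.edges) : e ∈ H.edgeSet := by
      refine edgeSet_mono hle ?_
      rw [edgeSet_deleteEdges]
      exact ⟨c.edges_subset_edgeSet he, fun h ↦ huv (Set.mem_singleton_iff.mp h ▸ he)⟩
    calc min H.egirth (H.edist u v + 1) ≤ H.egirth := min_le_left _ _
      _ ≤ (c.transfer H hedges).length := egirth_le_length (hc.transfer hedges)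
      _ = c.length := by rw [Walk.length_transfer]

theorem isSpanner_of_maximal_lt_egirth (ht : t ≠ 0)
    (hH : Maximal (fun H ↦ H ≤ G ∧ (t + 1 : ℕ) < H.egirth) H) : IsSpanner t H G := by
  refine .of_forall_adj ht hH.prop.1 fun u v huv ↦ ?_
  by_contra! hlt
  have hsup : (t + 1 : ℕ) < (H ⊔ edge u v).egirth := by
    refine (lt_min hH.prop.2 ?_).trans_le (min_egirth_edist_add_one_le_egirth_sup_edge H u v)
    push_cast
    exact (ENat.add_lt_add_iff_right ENat.one_ne_top).mpr hlt
  have hle : H ⊔ edge u v ≤ H :=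
    hH.le_of_ge ⟨sup_le hH.prop.1 (G.edge_le_iff.mpr (.inr huv)), hsup⟩ le_sup_left
  have hadj : H.Adj u v := hle (by simp [edge_adj, huv.ne])
  rw [edist_eq_one_iff_adj.mpr hadj] at hlt
  have : t < 1 := by exact_mod_cast hlt
  omega

theorem exists_isPath_concat_length_le (hw : G.edist v w ≤ i) (hx : i ≤ G.edist v x)
    (hwx : G.Adj w x) : ∃ p : G.Walk v w, (p.concat hwx).IsPath ∧ p.length ≤ i := by
  classical
  obtain ⟨p, hp⟩ := exists_walk_of_edist_ne_top (ne_top_of_le_ne_top (ENat.natCast_ne_top i) hw)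
  rw [← hp, Nat.cast_le] at hw
  have hlen : p.bypass.length ≤ i := p.length_bypass_le_length.trans hw
  refine ⟨p.bypass, p.bypass_isPath.concat (fun hmem ↦ ?_) hwx, hlen⟩
  have hlt := p.bypass.length_takeUntil_lt_length hmem hwx.ne'
  have hge : i ≤ (p.bypass.takeUntil x hmem).length := by
    exact_mod_cast hx.trans (Walk.edist_le _)
  omega

theorem eq_of_adj_of_edist_le_of_lt_egirth (hG : (2 * (i + 1) : ℕ) < G.egirth)
    (hx : i ≤ G.edist v x) (hwx : G.Adj w x) (hwx' : G.Adj w' x) (hw : G.edist v w ≤ i)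
    (hw' : G.edist v w' ≤ i) : w = w' := by
  obtain ⟨p, hp, hpi⟩ := exists_isPath_concat_length_le hw hx hwx
  obtain ⟨q, hq, hqi⟩ := exists_isPath_concat_length_le hw' hx hwx'
  by_contra hne
  have hpq : p.concat hwx ≠ q.concat hwx' := fun h ↦ hne <| by
    simpa using congrArg Walk.penultimate h
  obtain ⟨z, -, -, c, hc, hlen⟩ := hp.exists_isCycle_length_le_add_of_ne hq hpq
  have : 2 * (i + 1) < c.length := by exact_mod_cast hG.trans_le (egirth_le_length hc)
  rw [Walk.length_concat, Walk.length_concat] at hlen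
  omega

section Fintype

variable [Fintype V]

open scoped Classical in
/-- The sphere of radius `i` around `v`, that is, the `i`-th level of breadth-first search from
`v`. -/
noncomputable def distSphere (G : SimpleGraph V) (v : V) (i : ℕ) : Finset V :=
  {x | G.edist v x = i}

@[simp]
theorem mem_distSphere : x ∈ distSphere G v i ↔ G.edist v x = i := by
  simp [distSphere]

@[simp]
theorem distSphere_zero (G : SimpleGraph V) (v : V) : distSphere G v 0 = {v} := by
  ext x
  simp [eq_comm (a := v)]

theorem degree_le_card_bipartiteAbove_distSphere_add_one [DecidableRel G.Adj]
    (hG : (2 * (i + 1) : ℕ) < G.egirth) (hx : x ∈ distSphere G v i) :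
    G.degree x ≤ #((distSphere G v (i + 1)).bipartiteAbove G.Adj x) + 1 := by
  classical
  rw [mem_distSphere] at hx
  have hnear : #{w ∈ G.neighborFinset x | G.edist v w ≤ i} ≤ 1 := by
    refine card_le_one.mpr fun w hw w' hw' ↦ ?_
    simp only [mem_filter, mem_neighborFinset] at hw hw'
    exact eq_of_adj_of_edist_le_of_lt_egirth hG hx.ge hw.1.symm hw'.1.symm hw.2 hw'.2
  have hfar : {w ∈ G.neighborFinset x | ¬ G.edist v w ≤ i} ⊆
      (distSphere G v (i + 1)).bipartiteAbove G.Adj x := by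
    intro w hw
    simp only [mem_filter, mem_neighborFinset, not_le] at hw
    refine (mem_bipartiteAbove _).mpr ⟨mem_distSphere.mpr (le_antisymm ?_ ?_), hw.1⟩
    · calc G.edist v w ≤ G.edist v x + G.edist x w := G.edist_triangle
        _ = (i + 1 : ℕ) := by rw [hx, edist_eq_one_iff_adj.mpr hw.1]; rfl
    · exact_mod_cast Order.add_one_le_of_lt hw.2
  calc G.degree x = #(G.neighborFinset x) := (G.card_neighborFinset_eq_degree x).symm
    _ = #{w ∈ G.neighborFinset x | ¬ G.edist v w ≤ i} +
        #{w ∈ G.neighborFinset x | G.edist v w ≤ i} := by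
      rw [add_comm, card_filter_add_card_filter_not]
    _ ≤ _ := add_le_add (card_le_card hfar) hnear

theorem card_distSphere_mul_le [DecidableRel G.Adj] (hG : (2 * (i + 1) : ℕ) < G.egirth)
    (hd : ∀ x ∈ distSphere G v i, d < G.degree x) :
    #(distSphere G v i) * d ≤ #(distSphere G v (i + 1)) := by
  rw [← mul_one #(distSphere G v (i + 1))]
  refine card_mul_le_card_mul G.Adj (fun x hx ↦ ?_) fun y hy ↦ ?_
  · have := degree_le_card_bipartiteAbove_distSphere_add_one hG hx
    have := hd x hx
    omega
  · refine card_le_one.mpr fun w hw w' hw' ↦ ?_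
    simp only [mem_bipartiteBelow, mem_distSphere] at hw hw' hy
    exact eq_of_adj_of_edist_le_of_lt_egirth hG (hy ▸ by simp) hw.2 hw'.2 hw.1.le hw'.1.le

theorem pow_le_card_distSphere [DecidableRel G.Adj] (hG : (2 * k : ℕ) < G.egirth)
    (hd : ∀ x, G.Reachable v x → d < G.degree x) : d ^ k ≤ #(distSphere G v k) := by
  induction k with
  | zero => simp
  | succ k ih =>
    have hreach {x : V} (hx : x ∈ distSphere G v k) : G.Reachable v x :=
      reachable_of_edist_ne_top (by simp [mem_distSphere.mp hx])
    calc d ^ (k + 1) = d ^ k * d := pow_succ d k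
      _ ≤ #(distSphere G v k) * d :=
        Nat.mul_le_mul_right d (ih (lt_of_le_of_lt (by gcongr; omega) hG))
      _ ≤ #(distSphere G v (k + 1)) := card_distSphere_mul_le hG fun x hx ↦ hd x (hreach hx)

open scoped Classical in
theorem exists_le_forall_mem_support_lt_degree (h : d * G.support.ncard < G.edgeSet.ncard) :
    ∃ H ≤ G, H ≠ ⊥ ∧ ∀ x ∈ H.support, d < H.degree x := by
  obtain ⟨H, hH⟩ := (Set.toFinite
    {H : SimpleGraph V | H ≤ G ∧ d * H.support.ncard < H.edgeSet.ncard}).exists_minimal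
    ⟨G, le_rfl, h⟩
  refine ⟨H, hH.prop.1, ?_, fun x hx ↦ ?_⟩
  · rintro rfl
    simpa using hH.prop.2
  by_contra! hdeg
  have hedges : H.edgeSet.ncard ≤ (H.deleteIncidenceSet x).edgeSet.ncard + H.degree x := by
    have hinc : (H.incidenceSet x).ncard = H.degree x := by
      rw [← card_incidenceFinset_eq_degree, ← Set.ncard_coe_finset, incidenceFinset,
        Set.coe_toFinset]
    rw [edgeSet_deleteIncidenceSet, ← hinc]
    exact Set.ncard_le_ncard_sdiff_add_ncard _ _
  have hsupport : (H.deleteIncidenceSet x).support.ncard + 1 ≤ H.support.ncard := by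
    rw [← Set.ncard_sdiff_singleton_add_one hx]
    grw [Set.ncard_le_ncard (H.support_deleteIncidenceSet_subset x)]
  have hdense : d * (H.deleteIncidenceSet x).support.ncard <
      (H.deleteIncidenceSet x).edgeSet.ncard := by
    have := hH.prop.2
    have := Nat.mul_le_mul_left d hsupport
    rw [mul_add_one] at this
    omega
  have hle := hH.le_of_le ⟨(H.deleteIncidenceSet_le x).trans hH.prop.1, hdense⟩
    (H.deleteIncidenceSet_le x)
  exact (support_deleteIncidenceSet_subset H x (support_mono hle hx)).2 rfl

theorem ncard_edgeSet_le_of_card_lt_pow (hG : (2 * k : ℕ) < G.egirth)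
    (hd : Fintype.card V < d ^ k) : G.edgeSet.ncard ≤ d * Fintype.card V := by
  classical
  by_contra! hlt
  obtain ⟨H, hle, hne, hdeg⟩ := exists_le_forall_mem_support_lt_degree (G := G) (d := d) <|
    lt_of_le_of_lt (Nat.mul_le_mul_left d (by simpa using Set.ncard_le_card G.support)) hlt
  obtain ⟨v, hv⟩ := Set.nonempty_iff_ne_empty.mpr (H.support_eq_bot_iff.not.mpr hne)
  have hreach (x : V) (hvx : H.Reachable v x) : d < H.degree x := by
    rcases eq_or_ne x v with rfl | hne
    · exact hdeg x hv
    · exact hdeg x (mem_support_of_reachable hne hvx.symm)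
  have := pow_le_card_distSphere (hG.trans_le (egirth_anti hle)) hreach
  exact hd.not_ge (this.trans (card_le_univ _))

theorem ncard_edgeSet_le_rpow_add_of_lt_egirth (hk : k ≠ 0) (hG : (2 * k : ℕ) < G.egirth) :
    (G.edgeSet.ncard : ℝ) ≤
      (Fintype.card V : ℝ) ^ (1 + 1 / (k : ℝ)) + (Fintype.card V : ℝ) := by
  set n := Fintype.card V
  set r : ℝ := (n : ℝ) ^ (1 / (k : ℝ)) with hr_def
  have hn : (0 : ℝ) ≤ n := n.cast_nonneg
  have hr : 0 ≤ r := Real.rpow_nonneg hn _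
  have hpow : n < (⌊r⌋₊ + 1) ^ k := by
    have : (n : ℝ) < (⌊r⌋₊ + 1 : ℝ) ^ k := calc
      (n : ℝ) = r ^ k := by rw [hr_def, one_div, Real.rpow_inv_natCast_pow hn hk]
      _ < (⌊r⌋₊ + 1) ^ k := pow_lt_pow_left₀ (Nat.lt_floor_add_one r) hr hk
    exact_mod_cast this
  calc (G.edgeSet.ncard : ℝ) ≤ (⌊r⌋₊ + 1) * n := by
        exact_mod_cast ncard_edgeSet_le_of_card_lt_pow hG hpow
    _ ≤ (r + 1) * n := by gcongr; exact Nat.floor_le hr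
    _ = (n : ℝ) ^ (1 + 1 / (k : ℝ)) + n := by
      rw [Real.rpow_one_add' hn (by positivity)]
      ring

end Fintype

end Spanner

/-- **Greedy spanner.**  Every unweighted graph on `n` vertices has, for every
`k ≥ 1`, a spanning subgraph with at most `n^{1+1/k} + n` edges that preserves
reachability and distorts distances by a factor of at most `2k - 1`. -/
theorem greedy_spanner
    {V : Type*} [Fintype V] (G : SimpleGraph V) (k : ℕ) (hk : 1 ≤ k) :
    ∃ H : SimpleGraph V, H ≤ G ∧
      ((H.edgeSet.ncard : ℝ)
        ≤ (Fintype.card V : ℝ) ^ ((1 : ℝ) + 1 / (k : ℝ)) + (Fintype.card V : ℝ)) ∧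
      ∀ u v : V, (G.Reachable u v → H.Reachable u v) ∧
        H.dist u v ≤ (2 * k - 1) * G.dist u v := by
  obtain ⟨H, hH⟩ := (Set.toFinite {H | H ≤ G ∧ (2 * k - 1 + 1 : ℕ) < H.egirth}).exists_maximal
    ⟨⊥, bot_le, by rw [SimpleGraph.egirth_bot]; exact ENat.natCast_lt_top _⟩
  have hspanner : IsSpanner (2 * k - 1) H G := isSpanner_of_maximal_lt_egirth (by omega) hH
  have hgirth : (2 * k : ℕ) < H.egirth := by
    simpa only [Nat.sub_add_cancel (show 1 ≤ 2 * k by omega)] using hH.prop.2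
  exact ⟨H, hspanner.le, ncard_edgeSet_le_rpow_add_of_lt_egirth (by omega) hgirth,
    fun u v ↦ ⟨hspanner.reachable, hspanner.dist_le u v⟩⟩
end
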